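/- arXiv:1002.3256 — 3 statements merged into one kernel-verified Lean document; each statement's English description precedes it below -/
import Mathlib

section
/- Under Jacod's density hypothesis, let t = t_0 < t_1 < ⋯ < t_{n+1} = T and let Z_0, …, Z_n be bounded random variables with Z_i F_{t_i}-measurable, and set F^M_s(x) := p_s(x) 1_{X*_s > x}. There exists an F_t ⊗ B(ℝ)-measurable function w : Ω × ℝ → ℝ such that for P^L-almost every x, w(·,x) is a version of E_P[ Σ_{i=0}^n Z_i (F^M_{t_{i+1}}(x) − F^M_{t_i}(x)) | F_t ]; and for every such w one has, P-almost surely, E_P[ Σ_{i=0}^n Z_i 1_{t_i < τ ≤ t_{i+1}} | G^M_t ] = − w(·,L) / p_t(L). (Key step in the proof of Proposition 3.2: the recovery-payment term for stepwise F-predictable recovery processes under full information.) -/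
open MeasureTheory ProbabilityTheory Set
open scoped NNReal Classical

noncomputable section

/-- Running infimum `X*_t = inf_{s ≤ t} X_s` of the process `X` over the time interval
`[0, t]`. -/
def runInf {Ω : Type*} (X : ℝ≥0 → Ω → ℝ) (t : ℝ≥0) (ω : Ω) : ℝ :=
  ⨅ s : Set.Icc (0 : ℝ≥0) t, X s.1 ω

/-- The supermartingale `F^M_s(x) := p_s(x) 1_{X*_s > x}`. -/
def FM {Ω : Type*} (p : ℝ≥0 → ℝ → Ω → ℝ) (X : ℝ≥0 → Ω → ℝ) (s : ℝ≥0) (x : ℝ) (ω : Ω) : ℝ :=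
  p s x ω * (if x < runInf X s ω then 1 else 0)

/-!
Jacod's hypothesis at time `s` says that on `F_s ⊗ B(ℝ)` the law of `ω ↦ (ω, L ω)` has density
`p s` with respect to `P ⊗ P^L`. Since `{s < τ}` is the preimage under this map of the
`F_s ⊗ B(ℝ)`-measurable set `{(ω, x) | x < X*_s(ω)}`, the measure `Z 1_{s < τ} • P` with
`F_s`-measurable `Z` is carried to one with density `Z F^M_s`; with `1_{a < τ ≤ b}` equal to
`1_{a < τ} - 1_{b < τ}`, the payoff is therefore carried to the density
`-∑ Z_i (F^M_{t_{i+1}} - F^M_{t_i})`. Events of `F_t ∨ σ(L)` are preimages of events of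
`F_t ⊗ B(ℝ)`, on which this density may be replaced by its sectionwise projection `-w` onto `F_t`,
and dividing by the density `p t` of the law of `ω ↦ (ω, L ω)` itself gives the conditional
expectation, as in Bayes' formula.
-/

open Filter
open scoped ENNReal

section MeasurableProcess

variable {T Ω α : Type*} [TopologicalSpace T] [TopologicalSpace.SeparableSpace T]
  {_ : MeasurableSpace Ω} [ConditionallyCompleteLinearOrder α] [TopologicalSpace α]
  [OrderTopology α] [SecondCountableTopology α] [MeasurableSpace α] [BorelSpace α]

theorem measurable_ciInf_of_continuous {X : T → Ω → α} (hX : ∀ s, Measurable (X s))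
    (hX_cont : ∀ ω, Continuous fun s => X s ω) : Measurable fun ω => ⨅ s, X s ω := by
  obtain ⟨D, hD_countable, hD_dense⟩ := TopologicalSpace.exists_countable_dense T
  have := hD_countable.to_subtype
  simp_rw [← fun ω => hD_dense.ciInf' (hX_cont ω)]
  exact Measurable.iInf fun s : D => hX s

end MeasurableProcess

theorem adapted_runInf {Ω : Type*} [m0 : MeasurableSpace Ω] {F : Filtration ℝ≥0 m0}
    {X : ℝ≥0 → Ω → ℝ} (hX : Adapted F X) (hX_cont : ∀ ω, Continuous fun s => X s ω) :
    Adapted F (runInf X) := fun t =>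
  measurable_ciInf_of_continuous (fun s : Icc 0 t => (hX s).mono (F.mono s.2.2) le_rfl)
    fun ω => (hX_cont ω).comp continuous_subtype_val

theorem measurableSet_snd_lt {Ω α : Type*} {_ : MeasurableSpace Ω} [TopologicalSpace α]
    [MeasurableSpace α] [OpensMeasurableSpace α] [LinearOrder α] [OrderClosedTopology α]
    [SecondCountableTopology α] {f : Ω → α} (hf : Measurable f) :
    MeasurableSet {q : Ω × α | q.2 < f q.1} :=
  measurableSet_lt measurable_snd (hf.comp measurable_fst)

section Graph

variable {Ω β E : Type*} {m m' m0 : MeasurableSpace Ω} [mβ : MeasurableSpace β]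
  {P : Measure Ω} {μ : Measure β} {L : Ω → β} {p : Ω × β → ℝ}

theorem prod_measurableSpace_mono_left (hm : m ≤ m0) : m.prod mβ ≤ m0.prod mβ :=
  sup_le_sup_right (MeasurableSpace.comap_mono hm) _

theorem measurable_section {γ : Type*} [MeasurableSpace γ] {w : Ω × β → γ}
    (hw : Measurable[m.prod mβ] w) (x : β) : Measurable[m] fun ω => w (ω, x) :=
  hw.comp (@measurable_prodMk_right Ω β m mβ x)

theorem measurable_graph (hL : Measurable L) : Measurable fun ω => (ω, L ω) :=
  measurable_id.prodMk hL

theorem sup_comap_eq_comap_graph (m : MeasurableSpace Ω) (L : Ω → β) :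
    m ⊔ mβ.comap L = (m.prod mβ).comap fun ω => (ω, L ω) := by
  rw [MeasurableSpace.comap_prodMk]
  exact congrArg (· ⊔ _) MeasurableSpace.comap_id.symm

section JointVersions

theorem condLExp_iSup (hm : m ≤ m0) [SigmaFinite (P.trim hm)] {f : ℕ → Ω → ℝ≥0∞}
    (hf : ∀ n, Measurable (f n)) (hf_mono : Monotone f) :
    (fun ω => ⨆ n, P⁻[f n|m] ω) =ᵐ[P] P⁻[fun ω => ⨆ n, f n ω|m] := by
  refine ae_eq_condLExp hm P _ (Measurable.iSup fun n => measurable_condLExp m P (f n))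
    fun s hs => ?_
  rw [lintegral_iSup_ae (fun n => measurable_condLExp' m P (f n))
      fun n => ae_restrict_of_ae (condLExp_mono (ae_of_all _ (hf_mono n.le_succ))),
    lintegral_iSup hf hf_mono]
  exact iSup_congr fun n => setLIntegral_condLExp hm P (f n) hs

theorem condLExp_indicator_compl (hm : m ≤ m0) [SigmaFinite (P.trim hm)] {A : Set Ω}
    (hA : MeasurableSet A) :
    P⁻[Aᶜ.indicator 1|m] =ᵐ[P] 1 - P⁻[A.indicator 1|m] := by
  have hsum := condLExp_add_left (mΩ := m) (P := P) (Aᶜ.indicator 1)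
    (measurable_one.indicator hA).aemeasurable
  rw [indicator_self_add_compl, condLExp_one hm P] at hsum
  filter_upwards [hsum] with ω hω
  exact ENNReal.eq_sub_of_add_eq' ENNReal.one_ne_top ((add_comm _ _).trans hω.symm)

theorem exists_measurable_condLExp_section_indicator (hm : m ≤ m0)
    [SigmaFinite (P.trim hm)] {S : Set (Ω × β)} (hS : MeasurableSet S) :
    ∃ w : Ω × β → ℝ≥0∞, Measurable[m.prod mβ] w ∧
      ∀ x, (fun ω => w (ω, x)) =ᵐ[P] P⁻[((·, x) ⁻¹' S).indicator 1|m] := by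
  induction S, hS using MeasurableSpace.induction_on_inter generateFrom_prod.symm
    isPiSystem_prod with
  | empty => exact ⟨0, measurable_const, fun x => by
      rw [preimage_empty, indicator_empty', condLExp_zero]
      exact EventuallyEq.rfl⟩
  | basic S hS =>
    obtain ⟨A, _, B, hB, rfl⟩ := hS
    refine ⟨fun q => P⁻[A.indicator 1|m] q.1 * B.indicator 1 q.2, ?_, fun x => ?_⟩
    · exact Measurable.mul ((measurable_condLExp m P _).comp (@measurable_fst Ω β m mβ))
        ((measurable_one.indicator hB).comp (@measurable_snd Ω β m mβ))
    · by_cases hx : x ∈ B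
      · simp [hx]
      · simp only [mk_preimage_prod_left_eq_if, hx, if_false, indicator_empty',
          condLExp_zero, indicator_of_notMem, not_false_eq_true, mul_zero]
        exact EventuallyEq.rfl
  | compl S hS ih =>
    obtain ⟨w, hw, hw_version⟩ := ih
    refine ⟨fun q => 1 - w q, Measurable.const_sub hw 1, fun x => ?_⟩
    filter_upwards [hw_version x, condLExp_indicator_compl hm (measurable_prodMk_right hS)]
      with ω hω hω_compl
    rw [hω, preimage_compl, hω_compl, Pi.sub_apply, Pi.one_apply]
  | iUnion S hS_disjoint hS ih =>
    choose w hw hw_version using ih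
    have hsum_meas : Measurable[m.prod mβ] fun q => ∑' k, w k q := by
      simp_rw [ENNReal.tsum_eq_iSup_sum]
      exact Measurable.iSup fun s => s.measurable_sum fun k _ => hw k
    refine ⟨fun q => ∑' k, w k q, hsum_meas, fun x => ?_⟩
    have hindicator : (((·, x) ⁻¹' ⋃ k, S k).indicator 1 : Ω → ℝ≥0∞) =
        ∑' k, ((·, x) ⁻¹' S k).indicator 1 := by
      ext ω
      rw [preimage_iUnion, ENNReal.tsum_apply]
      exact congrFun (indicator_iUnion_of_pairwise_disjoint _
        (fun i j hij => (hS_disjoint hij).preimage _) 1) ω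
    rw [hindicator]
    refine EventuallyEq.trans ?_ (condLExp_tsum m fun k =>
      (measurable_one.indicator (measurable_prodMk_right (hS k))).aemeasurable).symm
    filter_upwards [ae_all_iff.2 fun k => hw_version k x] with ω hω
    simp only [hω, ENNReal.tsum_apply]

theorem exists_measurable_condLExp_section (hm : m ≤ m0)
    [SigmaFinite (P.trim hm)] {f : Ω × β → ℝ≥0∞} (hf : Measurable f) :
    ∃ w : Ω × β → ℝ≥0∞, Measurable[m.prod mβ] w ∧
      ∀ x, (fun ω => w (ω, x)) =ᵐ[P] P⁻[fun ω => f (ω, x) | m] := by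
  refine Measurable.ennreal_induction (motive := fun f => ∃ w : Ω × β → ℝ≥0∞,
    Measurable[m.prod mβ] w ∧ ∀ x, (fun ω => w (ω, x)) =ᵐ[P] P⁻[fun ω => f (ω, x) | m])
    (fun c S hS => ?_) (fun f g _ hf _ ihf ihg => ?_) (fun f hf hf_mono ih => ?_) hf
  · obtain ⟨w, hw, hw_version⟩ := exists_measurable_condLExp_section_indicator (P := P) hm hS
    refine ⟨fun q => c * w q, Measurable.const_mul hw c, fun x => ?_⟩
    have hscale : (fun ω => S.indicator (fun _ => c) (ω, x)) =
        c • ((·, x) ⁻¹' S).indicator (1 : Ω → ℝ≥0∞) := by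
      ext ω
      by_cases hq : (ω, x) ∈ S <;> simp [hq]
    rw [hscale]
    filter_upwards [hw_version x, condLExp_smul (mΩ := m) (P := P) _
      (measurable_one.indicator (measurable_prodMk_right hS)).aemeasurable c] with ω hω hω_smul
    rw [hω, hω_smul, Pi.smul_apply, smul_eq_mul]
  · obtain ⟨v, hv, hv_version⟩ := ihf
    obtain ⟨w, hw, hw_version⟩ := ihg
    exact ⟨v + w, Measurable.add hv hw, fun x => ((hv_version x).add (hw_version x)).trans
      (condLExp_add_left _ (measurable_section hf x).aemeasurable).symm⟩
  · choose w hw hw_version using ih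
    refine ⟨fun q => ⨆ n, w n q, Measurable.iSup hw, fun x => ?_⟩
    have hsup := condLExp_iSup (P := P) hm (fun n => measurable_section (hf n) x)
      fun i j hij ω => hf_mono hij (ω, x)
    filter_upwards [ae_all_iff.2 fun n => hw_version n x, hsup] with ω hω hω_sup
    simp only [hω, ← hω_sup]

theorem exists_measurable_condExp_section (hm : m ≤ m0)
    [SigmaFinite (P.trim hm)] {f : Ω × β → ℝ} (hf : Measurable f) :
    ∃ w : Ω × β → ℝ, Measurable[m.prod mβ] w ∧
      ∀ x, Integrable (fun ω => f (ω, x)) P →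
        (fun ω => w (ω, x)) =ᵐ[P] P[fun ω => f (ω, x) | m] := by
  obtain ⟨u, hu, hu_version⟩ := exists_measurable_condLExp_section (P := P) hm hf.ennreal_ofReal
  obtain ⟨v, hv, hv_version⟩ :=
    exists_measurable_condLExp_section (P := P) hm (f := fun q => ENNReal.ofReal (-f q))
      hf.neg.ennreal_ofReal
  refine ⟨fun q => (u q).toReal - (v q).toReal,
    Measurable.sub (Measurable.ennreal_toReal hu) (Measurable.ennreal_toReal hv),
    fun x hx => ?_⟩
  have hsplit : (fun ω => f (ω, x)) = (fun ω => (ENNReal.ofReal (f (ω, x))).toReal) -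
      fun ω => (ENNReal.ofReal (-f (ω, x))).toReal := by
    ext ω
    simp only [Pi.sub_apply, ENNReal.toReal_ofReal', max_zero_sub_max_neg_zero_eq_self]
  have hpos := toReal_condLExp m hx.aemeasurable.ennreal_ofReal hx.lintegral_lt_top.ne
  have hneg := toReal_condLExp m hx.neg.aemeasurable.ennreal_ofReal hx.neg.lintegral_lt_top.ne
  have hsub := condExp_sub (m := m) (μ := P)
    (integrable_toReal_of_lintegral_ne_top hx.aemeasurable.ennreal_ofReal hx.lintegral_lt_top.ne)
    (integrable_toReal_of_lintegral_ne_top hx.neg.aemeasurable.ennreal_ofReal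
      hx.neg.lintegral_lt_top.ne)
  rw [hsplit]
  filter_upwards [hu_version x, hv_version x, hpos, hneg, hsub] with ω h₁ h₂ h₃ h₄ h₅
  simp only [Pi.neg_apply] at h₄ h₅
  rw [h₅, h₁, h₂, h₃, Pi.sub_apply, h₄]

end JointVersions

section SectionwiseVersions

variable [NormedAddCommGroup E] [NormedSpace ℝ E] [SFinite P] [SFinite μ] {Y w : Ω × β → E}

theorem setIntegral_prod_symm_section {S : Set (Ω × β)} (hS : MeasurableSet S)
    {f : Ω × β → E} (hf : Integrable f (P.prod μ)) :
    ∫ q in S, f q ∂(P.prod μ) = ∫ x, ∫ ω in (·, x) ⁻¹' S, f (ω, x) ∂P ∂μ := by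
  rw [← integral_indicator hS, integral_prod_symm _ (hf.indicator hS)]
  refine integral_congr_ae (ae_of_all _ fun x => ?_)
  exact integral_indicator (f := fun ω => f (ω, x)) (measurable_prodMk_right hS)

variable [CompleteSpace E]

theorem integrable_prod_of_section_condExp (hm : m ≤ m0) (hY : Integrable Y (P.prod μ))
    (hw : StronglyMeasurable[m.prod mβ] w)
    (hw_version : ∀ᵐ x ∂μ, (fun ω => w (ω, x)) =ᵐ[P] P[fun ω => Y (ω, x) | m]) :
    Integrable w (P.prod μ) := by
  have hw₀ : StronglyMeasurable w := hw.mono (prod_measurableSpace_mono_left hm)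
  rw [integrable_prod_iff' hw₀.aestronglyMeasurable]
  refine ⟨hw_version.mono fun x hx => integrable_condExp.congr hx.symm,
    hY.norm.integral_prod_right.mono' hw₀.norm.integral_prod_left.aestronglyMeasurable ?_⟩
  filter_upwards [hw_version] with x hx
  calc ‖∫ ω, ‖w (ω, x)‖ ∂P‖ = ∫ ω, ‖P[fun ω => Y (ω, x) | m] ω‖ ∂P := by
        rw [Real.norm_of_nonneg (integral_nonneg fun _ => norm_nonneg _)]
        exact integral_congr_ae (hx.fun_comp norm)
    _ ≤ ∫ ω, ‖Y (ω, x)‖ ∂P := integral_norm_condExp_le _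

theorem setIntegral_prod_eq_of_section_condExp (hm : m ≤ m0) [SigmaFinite (P.trim hm)]
    (hY : Integrable Y (P.prod μ)) (hw : StronglyMeasurable[m.prod mβ] w)
    (hw_version : ∀ᵐ x ∂μ, (fun ω => w (ω, x)) =ᵐ[P] P[fun ω => Y (ω, x) | m])
    {S : Set (Ω × β)} (hS : MeasurableSet[m.prod mβ] S) :
    ∫ q in S, w q ∂(P.prod μ) = ∫ q in S, Y q ∂(P.prod μ) := by
  have hS₀ : MeasurableSet S := prod_measurableSpace_mono_left hm S hS
  rw [setIntegral_prod_symm_section hS₀ (integrable_prod_of_section_condExp hm hY hw hw_version),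
    setIntegral_prod_symm_section hS₀ hY]
  refine integral_congr_ae ?_
  filter_upwards [hw_version, hY.prod_left_ae] with x hx hYx
  rw [integral_congr_ae (ae_restrict_of_ae hx)]
  exact setIntegral_condExp hm hYx (@measurable_prodMk_right Ω β m mβ x _ hS)

end SectionwiseVersions

/-- Jacod's density hypothesis at a single time: `p (ω, x)` is a jointly measurable version of the
conditional density of `L` given `m` with respect to the reference measure `μ` (which is the law of
`L` in Jacod's setting). -/
structure IsCondDensity {Ω β : Type*} (m : MeasurableSpace Ω) [m0 : MeasurableSpace Ω]
    [mβ : MeasurableSpace β] (P : Measure Ω) (L : Ω → β) (μ : Measure β) (p : Ω × β → ℝ) :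
    Prop where
  nonneg : ∀ q, 0 ≤ p q
  measurable : Measurable[m.prod mβ] p
  condExp_eq : ∀ f : β → ℝ, Measurable f → (∃ C, ∀ x, |f x| ≤ C) →
    P[fun ω => f (L ω) | m] =ᵐ[P] fun ω => ∫ x, f x * p (ω, x) ∂μ

/-- On the `σ`-algebra `m ⊗ mβ`, the image of the measure `V • P` under the graph map
`ω ↦ (ω, L ω)` has density `Y` with respect to `P ⊗ μ`. The function `Y` is only required to be
measurable for the full `σ`-algebra, so that densities coming from later times can be used. -/
structure IsGraphDensity {Ω β E : Type*} (m : MeasurableSpace Ω) [m0 : MeasurableSpace Ω]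
    [mβ : MeasurableSpace β] [NormedAddCommGroup E] [NormedSpace ℝ E] (P : Measure Ω) (L : Ω → β)
    (μ : Measure β) (V : Ω → E) (Y : Ω × β → E) : Prop where
  integrable_fun : Integrable V P
  integrable_density : Integrable Y (P.prod μ)
  setIntegral_eq : ∀ S, MeasurableSet[m.prod mβ] S →
    ∫ ω in (fun ω => (ω, L ω)) ⁻¹' S, V ω ∂P = ∫ q in S, Y q ∂(P.prod μ)

namespace IsGraphDensity

variable [NormedAddCommGroup E] [NormedSpace ℝ E] {V V' : Ω → E} {Y Y' : Ω × β → E}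

theorem mono (h : IsGraphDensity m' P L μ V Y) (hm : m ≤ m') :
    IsGraphDensity m P L μ V Y :=
  ⟨h.integrable_fun, h.integrable_density,
    fun S hS => h.setIntegral_eq S (prod_measurableSpace_mono_left hm S hS)⟩

theorem sub (h : IsGraphDensity m P L μ V Y) (h' : IsGraphDensity m P L μ V' Y') :
    IsGraphDensity m P L μ (fun ω => V ω - V' ω) fun q => Y q - Y' q where
  integrable_fun := h.integrable_fun.sub h'.integrable_fun
  integrable_density := h.integrable_density.sub h'.integrable_density
  setIntegral_eq S hS := by
    rw [integral_sub h.integrable_fun.integrableOn h'.integrable_fun.integrableOn,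
      integral_sub h.integrable_density.integrableOn h'.integrable_density.integrableOn,
      h.setIntegral_eq S hS, h'.setIntegral_eq S hS]

theorem finsetSum {κ : Type*} (s : Finset κ) {V : κ → Ω → E} {Y : κ → Ω × β → E}
    (h : ∀ i ∈ s, IsGraphDensity m P L μ (V i) (Y i)) :
    IsGraphDensity m P L μ (fun ω => ∑ i ∈ s, V i ω) fun q => ∑ i ∈ s, Y i q where
  integrable_fun := integrable_finsetSum s fun i hi => (h i hi).integrable_fun
  integrable_density := integrable_finsetSum s fun i hi => (h i hi).integrable_density
  setIntegral_eq S hS := by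
    rw [integral_finsetSum s fun i hi => (h i hi).integrable_fun.integrableOn,
      integral_finsetSum s fun i hi => (h i hi).integrable_density.integrableOn]
    exact Finset.sum_congr rfl fun i hi => (h i hi).setIntegral_eq S hS

theorem condExp_sup_comap_eq [CompleteSpace E] [IsFiniteMeasure P] (hm : m ≤ m0)
    (hL : Measurable L) (hV : IsGraphDensity m P L μ V Y) {H : Ω × β → E}
    (hH_meas : StronglyMeasurable[m.prod mβ] H)
    (hH : IsGraphDensity m P L μ (fun ω => H (ω, L ω)) Y')
    (hYY' : ∀ S, MeasurableSet[m.prod mβ] S →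
      ∫ q in S, Y' q ∂(P.prod μ) = ∫ q in S, Y q ∂(P.prod μ)) :
    P[V|m ⊔ mβ.comap L] =ᵐ[P] fun ω => H (ω, L ω) := by
  refine (ae_eq_condExp_of_forall_setIntegral_eq (sup_le hm hL.comap_le) hV.integrable_fun
    (fun s _ _ => hH.integrable_fun.integrableOn) (fun s hs _ => ?_) ?_).symm
  · rw [sup_comap_eq_comap_graph] at hs
    obtain ⟨S, hS, rfl⟩ := hs
    rw [hH.setIntegral_eq S hS, hV.setIntegral_eq S hS, hYY' S hS]
  · rw [sup_comap_eq_comap_graph]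
    exact (hH_meas.comp_measurable (comap_measurable _)).aestronglyMeasurable

end IsGraphDensity

namespace IsCondDensity

variable [IsFiniteMeasure P] [SFinite μ]

theorem integrable (hp : IsCondDensity m P L μ p) (hm : m ≤ m0) : Integrable p (P.prod μ) := by
  have hmass : ∀ᵐ ω ∂P, ∫ x, p (ω, x) ∂μ = 1 := by
    have h := hp.condExp_eq (fun _ => 1) measurable_const ⟨1, fun _ => abs_one.le⟩
    rw [condExp_const hm] at h
    filter_upwards [h] with ω hω
    simpa only [one_mul] using hω.symm
  rw [integrable_prod_iff
    (hp.measurable.mono (prod_measurableSpace_mono_left hm) le_rfl).aestronglyMeasurable]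
  refine ⟨?_, (integrable_const (1 : ℝ)).congr ?_⟩
  · filter_upwards [hmass] with ω hω
    exact not_imp_comm.1 integral_undef (hω ▸ one_ne_zero)
  · filter_upwards [hmass] with ω hω
    simp only [Real.norm_of_nonneg (hp.nonneg _), hω]

theorem measure_graph_preimage_prod (hp : IsCondDensity m P L μ p) (hm : m ≤ m0)
    (hL : Measurable L) {A : Set Ω} {B : Set β} (hA : MeasurableSet[m] A) (hB : MeasurableSet B) :
    P ((fun ω => (ω, L ω)) ⁻¹' A ×ˢ B) = ∫⁻ q in A ×ˢ B, ENNReal.ofReal (p q) ∂(P.prod μ) := by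
  have hintegral : ∫ ω in A, ∫ x in B, p (ω, x) ∂μ ∂P = P.real (A ∩ L ⁻¹' B) :=
    calc ∫ ω in A, ∫ x in B, p (ω, x) ∂μ ∂P
        = ∫ ω in A, P[(L ⁻¹' B).indicator 1|m] ω ∂P := by
          refine integral_congr_ae (ae_restrict_of_ae ?_)
          filter_upwards [hp.condExp_eq (B.indicator 1) (measurable_one.indicator hB)
            ⟨1, fun x => by by_cases hx : x ∈ B <;> simp [hx]⟩] with ω hω
          rw [← integral_indicator hB]
          refine Eq.trans (integral_congr_ae (ae_of_all _ fun x => ?_)) hω.symm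
          by_cases hx : x ∈ B <;> simp [hx]
      _ = P.real (A ∩ L ⁻¹' B) := by
          rw [setIntegral_condExp hm ((integrable_const 1).indicator (hL hB)) hA,
            integral_indicator_one (hL hB), measureReal_restrict_apply (hL hB), inter_comm]
  rw [← ofReal_integral_eq_lintegral_ofReal (hp.integrable hm).integrableOn
      (ae_of_all _ hp.nonneg), setIntegral_prod _ (hp.integrable hm).integrableOn, hintegral,
    ofReal_measureReal]
  rfl

theorem map_graph_trim_eq (hp : IsCondDensity m P L μ p) (hm : m ≤ m0) (hL : Measurable L) :
    (P.map fun ω => (ω, L ω)).trim (prod_measurableSpace_mono_left hm) =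
      ((P.prod μ).withDensity fun q => ENNReal.ofReal (p q)).trim
        (prod_measurableSpace_mono_left hm) := by
  have hrect : ∀ A B, MeasurableSet[m] A → MeasurableSet B →
      (P.map fun ω => (ω, L ω)).trim (prod_measurableSpace_mono_left hm) (A ×ˢ B) =
        ((P.prod μ).withDensity fun q => ENNReal.ofReal (p q)).trim
          (prod_measurableSpace_mono_left hm) (A ×ˢ B) := fun A B hA hB => by
    have hAB : MeasurableSet[m.prod mβ] (A ×ˢ B) := @MeasurableSet.prod _ _ m _ _ _ hA hB
    have hAB₀ : MeasurableSet (A ×ˢ B) := (hm A hA).prod hB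
    rw [trim_measurableSet_eq _ hAB, trim_measurableSet_eq _ hAB,
      Measure.map_apply (measurable_graph hL) hAB₀, withDensity_apply _ hAB₀]
    exact hp.measure_graph_preimage_prod hm hL hA hB
  have : IsFiniteMeasure ((P.map fun ω => (ω, L ω)).trim
    (prod_measurableSpace_mono_left (mβ := mβ) hm)) := isFiniteMeasure_trim _
  refine @ext_of_generate_finite (Ω × β) (m.prod mβ) _ _ _
    (@generateFrom_prod Ω β m mβ).symm (@isPiSystem_prod Ω β m mβ) _ ?_ ?_
  · rintro _ ⟨A, hA, B, hB, rfl⟩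
    exact hrect A B hA hB
  · rw [← univ_prod_univ]
    exact hrect univ univ MeasurableSet.univ MeasurableSet.univ

theorem measure_graph_preimage (hp : IsCondDensity m P L μ p) (hm : m ≤ m0) (hL : Measurable L)
    {S : Set (Ω × β)} (hS : MeasurableSet[m.prod mβ] S) :
    P ((fun ω => (ω, L ω)) ⁻¹' S) = ∫⁻ q in S, ENNReal.ofReal (p q) ∂(P.prod μ) := by
  have hS₀ : MeasurableSet S := prod_measurableSpace_mono_left hm S hS
  rw [← Measure.map_apply (measurable_graph hL) hS₀, ← withDensity_apply _ hS₀,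
    ← trim_measurableSet_eq (prod_measurableSpace_mono_left hm) hS, hp.map_graph_trim_eq hm hL,
    trim_measurableSet_eq _ hS]

theorem ae_pos (hp : IsCondDensity m P L μ p) (hm : m ≤ m0) (hL : Measurable L) :
    ∀ᵐ ω ∂P, 0 < p (ω, L ω) := by
  have hS : MeasurableSet[m.prod mβ] {q | p q ≤ 0} :=
    hp.measurable measurableSet_Iic
  simp only [ae_iff, not_lt]
  refine (hp.measure_graph_preimage hm hL hS).trans ?_
  exact (setLIntegral_congr_fun (prod_measurableSpace_mono_left hm _ hS)
    fun q hq => ENNReal.ofReal_of_nonpos hq).trans lintegral_zero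

section Banach

variable [NormedAddCommGroup E] [NormedSpace ℝ E] {H : Ω × β → E}

theorem integrable_comp_graph (hp : IsCondDensity m P L μ p) (hm : m ≤ m0)
    (hL : Measurable L) (hH : StronglyMeasurable[m.prod mβ] H)
    (hpH : Integrable (fun q => p q • H q) (P.prod μ)) : Integrable (fun ω => H (ω, L ω)) P := by
  have hle := prod_measurableSpace_mono_left (mβ := mβ) hm
  have hdensity : Integrable H ((P.prod μ).withDensity fun q => ENNReal.ofReal (p q)) := by
    rw [integrable_withDensity_iff_integrable_smul'
      (hp.measurable.mono hle le_rfl).ennreal_ofReal (ae_of_all _ fun _ => ENNReal.ofReal_lt_top)]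
    simpa only [ENNReal.toReal_ofReal (hp.nonneg _)] using hpH
  have htrim := hdensity.trim hle hH
  rw [← hp.map_graph_trim_eq hm hL] at htrim
  exact (integrable_of_integrable_trim hle htrim).comp_measurable (measurable_graph hL)

theorem integral_comp_graph (hp : IsCondDensity m P L μ p) (hm : m ≤ m0)
    (hL : Measurable L) (hH : StronglyMeasurable[m.prod mβ] H) :
    ∫ ω, H (ω, L ω) ∂P = ∫ q, p q • H q ∂(P.prod μ) := by
  have hle := prod_measurableSpace_mono_left (mβ := mβ) hm
  calc ∫ ω, H (ω, L ω) ∂P = ∫ q, H q ∂(P.map fun ω => (ω, L ω)) :=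
        (integral_map (measurable_graph hL).aemeasurable
          (hH.mono hle).aestronglyMeasurable).symm
    _ = ∫ q, H q ∂((P.prod μ).withDensity fun q => ENNReal.ofReal (p q)) := by
        rw [integral_trim hle hH, hp.map_graph_trim_eq hm hL, ← integral_trim hle hH]
    _ = ∫ q, p q • H q ∂(P.prod μ) := by
        rw [integral_withDensity_eq_integral_toReal_smul
          (hp.measurable.mono hle le_rfl).ennreal_ofReal
          (ae_of_all _ fun _ => ENNReal.ofReal_lt_top)]
        simp only [ENNReal.toReal_ofReal (hp.nonneg _)]

theorem isGraphDensity (hp : IsCondDensity m P L μ p) (hm : m ≤ m0) (hL : Measurable L)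
    (hH : StronglyMeasurable[m.prod mβ] H) (hpH : Integrable (fun q => p q • H q) (P.prod μ)) :
    IsGraphDensity m P L μ (fun ω => H (ω, L ω)) fun q => p q • H q where
  integrable_fun := hp.integrable_comp_graph hm hL hH hpH
  integrable_density := hpH
  setIntegral_eq S hS := by
    have hS₀ : MeasurableSet S := prod_measurableSpace_mono_left hm S hS
    rw [← integral_indicator (measurable_graph hL hS₀), ← integral_indicator hS₀]
    refine (hp.integral_comp_graph hm hL (hH.indicator hS)).trans ?_
    simp_rw [indicator_smul]

variable {V : Ω → E} {Y w : Ω × β → E}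

-- `Y` need not vanish where `p` does; cutting it off there makes division by `p` harmless.
theorem isGraphDensity_indicator_support (hp : IsCondDensity m P L μ p) (hm : m ≤ m0)
    (hL : Measurable L) (hV : IsGraphDensity m P L μ V Y) :
    IsGraphDensity m P L μ V ((Function.support p).indicator Y) where
  integrable_fun := hV.integrable_fun
  integrable_density := hV.integrable_density.indicator
    (prod_measurableSpace_mono_left hm _ (measurableSet_support hp.measurable))
  setIntegral_eq S hS := by
    have hsupport : MeasurableSet[m.prod mβ] (Function.support p) :=
      measurableSet_support hp.measurable
    rw [setIntegral_indicator (prod_measurableSpace_mono_left hm _ hsupport),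
      ← hV.setIntegral_eq _ (hS.inter hsupport)]
    refine setIntegral_congr_set ?_
    filter_upwards [hp.ae_pos hm hL] with ω hω
    exact propext (and_iff_left hω.ne').symm

theorem condExp_sup_comap_eq [CompleteSpace E] (hp : IsCondDensity m P L μ p) (hm : m ≤ m0)
    (hL : Measurable L) (hV : IsGraphDensity m P L μ V Y) (hw : StronglyMeasurable[m.prod mβ] w)
    (hw_version : ∀ᵐ x ∂μ, (fun ω => w (ω, x)) =ᵐ[P] P[fun ω => Y (ω, x) | m]) :
    P[V|m ⊔ mβ.comap L] =ᵐ[P] fun ω => (p (ω, L ω))⁻¹ • w (ω, L ω) := by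
  have hsupport : MeasurableSet[m.prod mβ] (Function.support p) :=
    measurableSet_support hp.measurable
  have hsupport₀ := prod_measurableSpace_mono_left hm _ hsupport
  have hquotient : (fun q => p q • (p q)⁻¹ • w q) = (Function.support p).indicator w := by
    ext q
    by_cases hq : p q = 0 <;> simp [hq]
  have hw_integrable : Integrable w (P.prod μ) :=
    integrable_prod_of_section_condExp hm hV.integrable_density hw hw_version
  have hH_meas : StronglyMeasurable[m.prod mβ] fun q => (p q)⁻¹ • w q :=
    hp.measurable.inv.stronglyMeasurable.smul hw
  refine (hp.isGraphDensity_indicator_support hm hL hV).condExp_sup_comap_eq hm hL hH_meas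
    (hp.isGraphDensity hm hL hH_meas (hquotient ▸ hw_integrable.indicator hsupport₀))
    fun S hS => ?_
  rw [hquotient, setIntegral_indicator hsupport₀, setIntegral_indicator hsupport₀]
  exact setIntegral_prod_eq_of_section_condExp hm hV.integrable_density hw hw_version
    (hS.inter hsupport)

end Banach

theorem isGraphDensity_mul_indicator (hp : IsCondDensity m P L μ p) (hm : m ≤ m0)
    (hL : Measurable L) {A : Set (Ω × β)} (hA : MeasurableSet[m.prod mβ] A) {Z : Ω → ℝ}
    (hZ_meas : Measurable[m] Z) (hZ_bdd : ∃ C, ∀ ω, |Z ω| ≤ C) :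
    IsGraphDensity m P L μ (fun ω => Z ω * A.indicator 1 (ω, L ω))
      fun q => Z q.1 * A.indicator p q := by
  obtain ⟨C, hC⟩ := hZ_bdd
  have hle := prod_measurableSpace_mono_left (mβ := mβ) hm
  have hZ_fst : Measurable[m.prod mβ] fun q : Ω × β => Z q.1 :=
    hZ_meas.comp (@measurable_fst Ω β m mβ)
  have hH_meas : StronglyMeasurable[m.prod mβ] fun q => Z q.1 * A.indicator 1 q :=
    hZ_fst.stronglyMeasurable.mul (stronglyMeasurable_one.indicator hA)
  have hdensity : (fun q => p q • (Z q.1 * A.indicator 1 q)) =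
      fun q => Z q.1 * A.indicator p q := by
    ext q
    by_cases hq : q ∈ A <;> simp [hq, mul_comm]
  rw [← hdensity]
  refine hp.isGraphDensity hm hL hH_meas ?_
  rw [hdensity]
  exact ((hp.integrable hm).indicator (hle A hA)).bdd_mul (c := C)
    (hZ_fst.mono hle le_rfl).aestronglyMeasurable (ae_of_all _ fun q => hC q.1)

end IsCondDensity

section Recovery

variable {ι : Type*} [LinearOrder ι] {F : Filtration ι m0} [IsFiniteMeasure P] [SFinite μ]
  {A : ι → Set (Ω × β)} {τ : Ω → ι} {p : ι → Ω × β → ℝ}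

theorem isGraphDensity_mul_indicator_Ioc (hL : Measurable L)
    (hA : ∀ s, MeasurableSet[(F s).prod mβ] (A s)) (hτ : ∀ s ω, s < τ ω ↔ (ω, L ω) ∈ A s)
    (hp : ∀ s, IsCondDensity (F s) P L μ (p s)) {t a b : ι} (hta : t ≤ a) (hab : a ≤ b)
    {Z : Ω → ℝ} (hZ_meas : Measurable[F a] Z) (hZ_bdd : ∃ C, ∀ ω, |Z ω| ≤ C) :
    IsGraphDensity (F t) P L μ (fun ω => Z ω * (Ioc a b).indicator 1 (τ ω))
      fun q => Z q.1 * ((A a).indicator (p a) q - (A b).indicator (p b) q) := by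
  have ha := ((hp a).isGraphDensity_mul_indicator (F.le a) hL (hA a) hZ_meas hZ_bdd).mono
    (F.mono hta)
  have hb := ((hp b).isGraphDensity_mul_indicator (F.le b) hL (hA b)
    (hZ_meas.mono (F.mono hab) le_rfl) hZ_bdd).mono (F.mono (hta.trans hab))
  have hIoc : ∀ ω, ((Ioc a b).indicator 1 (τ ω) : ℝ) =
      (A a).indicator 1 (ω, L ω) - (A b).indicator 1 (ω, L ω) := fun ω => by
    rw [← Ioi_sdiff_Ioi, indicator_sdiff (Ioi_subset_Ioi hab)]
    simp only [Pi.sub_apply, indicator, mem_Ioi, hτ, Pi.one_apply]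
  simp only [hIoc, mul_sub]
  exact ha.sub hb

variable {κ : Type*} [Fintype κ]

theorem full_information_recovery_term_general (hL : Measurable L)
    (hA : ∀ s, MeasurableSet[(F s).prod mβ] (A s)) (hτ : ∀ s ω, s < τ ω ↔ (ω, L ω) ∈ A s)
    (hp : ∀ s, IsCondDensity (F s) P L μ (p s)) {t : ι} {a b : κ → ι} (hta : ∀ i, t ≤ a i)
    (hab : ∀ i, a i ≤ b i) {Z : κ → Ω → ℝ} (hZ_meas : ∀ i, Measurable[F (a i)] (Z i))
    (hZ_bdd : ∀ i, ∃ C, ∀ ω, |Z i ω| ≤ C) :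
    (∃ w : Ω × β → ℝ, Measurable[(F t).prod mβ] w ∧
      ∀ᵐ x ∂μ, (fun ω => w (ω, x)) =ᵐ[P]
        P[fun ω => ∑ i, Z i ω *
          ((A (b i)).indicator (p (b i)) (ω, x) - (A (a i)).indicator (p (a i)) (ω, x))|F t]) ∧
    ∀ w : Ω × β → ℝ, Measurable[(F t).prod mβ] w →
      (∀ᵐ x ∂μ, (fun ω => w (ω, x)) =ᵐ[P]
        P[fun ω => ∑ i, Z i ω *
          ((A (b i)).indicator (p (b i)) (ω, x) - (A (a i)).indicator (p (a i)) (ω, x))|F t]) →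
      P[fun ω => ∑ i, Z i ω * (Ioc (a i) (b i)).indicator 1 (τ ω)|F t ⊔ mβ.comap L] =ᵐ[P]
        fun ω => -(w (ω, L ω) / p t (ω, L ω)) := by
  set Y : Ω × β → ℝ := fun q => ∑ i, Z i q.1 *
    ((A (b i)).indicator (p (b i)) q - (A (a i)).indicator (p (a i)) q) with hY
  have hpayoff : IsGraphDensity (F t) P L μ
      (fun ω => ∑ i, Z i ω * (Ioc (a i) (b i)).indicator 1 (τ ω)) fun q => -Y q := by
    simp only [hY, ← Finset.sum_neg_distrib, ← mul_neg, neg_sub]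
    exact IsGraphDensity.finsetSum _ fun i _ =>
      isGraphDensity_mul_indicator_Ioc hL hA hτ hp (hta i) (hab i) (hZ_meas i) (hZ_bdd i)
  refine ⟨?_, fun w hw hw_version => ?_⟩
  · have hdensity_meas : ∀ s, Measurable ((A s).indicator (p s)) := fun s =>
      ((hp s).measurable.indicator (hA s)).mono (prod_measurableSpace_mono_left (F.le s)) le_rfl
    have hY_meas : Measurable Y := Finset.measurable_fun_sum _ fun i _ =>
      (((hZ_meas i).mono (F.le _) le_rfl).comp measurable_fst).mul
        ((hdensity_meas _).sub (hdensity_meas _))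
    obtain ⟨w, hw, hw_version⟩ := exists_measurable_condExp_section (P := P) (F.le t) hY_meas
    refine ⟨w, hw, ?_⟩
    filter_upwards [hpayoff.integrable_density.prod_left_ae] with x hx
    exact hw_version x (integrable_neg_iff.1 hx)
  · have hbayes := (hp t).condExp_sup_comap_eq (F.le t) hL hpayoff
      (w := fun q => -w q) hw.neg.stronglyMeasurable
      (hw_version.mono fun x hx => hx.neg.trans (condExp_neg _ _).symm)
    refine hbayes.trans (ae_of_all _ fun ω => ?_)
    simp only [smul_eq_mul, mul_neg, div_eq_inv_mul]

end Recovery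

end Graph

/-- **Key step in the proof of Proposition 3.2.** Under Jacod's density hypothesis, for a
partition `t = t_0 < t_1 < ⋯ < t_{n+1} = T` and bounded `F_{t_i}`-measurable `Z_i`, there is
an `F_t ⊗ B(ℝ)`-measurable `w` such that for `P^L`-a.e. `x`, `w(·,x)` is a version of
`E_P[Σ_i Z_i (F^M_{t_{i+1}}(x) − F^M_{t_i}(x)) | F_t]`; and for every such `w`, `P`-a.s.,
`E_P[Σ_i Z_i 1_{t_i < τ ≤ t_{i+1}} | G^M_t] = − w(·,L)/p_t(L)`. -/
theorem full_information_recovery_term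
    {Ω : Type*} [m0 : MeasurableSpace Ω] {P : Measure Ω} [IsProbabilityMeasure P]
    (F : Filtration ℝ≥0 m0)
    (X : ℝ≥0 → Ω → ℝ) (hX_adapted : Adapted F X)
    (hX_cont : ∀ ω, Continuous fun s => X s ω)
    (L : Ω → ℝ) (hL : Measurable L)
    (hX0 : ∀ᵐ ω ∂P, L ω < X 0 ω)
    (τ : Ω → ℝ≥0)
    (hτ : ∀ (θ : ℝ≥0) (ω : Ω), θ < τ ω ↔ L ω < runInf X θ ω)
    -- Jacod's density hypothesis
    (p : ℝ≥0 → ℝ → Ω → ℝ)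
    (hp_nonneg : ∀ t x ω, 0 ≤ p t x ω)
    (hp_meas : ∀ t, Measurable[(F t).prod inferInstance] fun q : Ω × ℝ => p t q.2 q.1)
    (hp_pos : ∀ t, ∀ᵐ ω ∂P, 0 < p t (L ω) ω)
    (hp_density : ∀ (t : ℝ≥0) (f : ℝ → ℝ), Measurable f → (∃ C, ∀ x, |f x| ≤ C) →
      (P[fun ω => f (L ω)|F t]) =ᵐ[P] fun ω => ∫ x, f x * p t x ω ∂(P.map L))
    -- the partition `t = t_0 < t_1 < ⋯ < t_{n+1} = T` and the stepwise recovery payments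
    (n : ℕ) (ts : Fin (n + 2) → ℝ≥0) (hts : StrictMono ts)
    (t T : ℝ≥0) (hts0 : ts 0 = t) (htsT : ts (Fin.last (n + 1)) = T)
    (Z : Fin (n + 1) → Ω → ℝ)
    (hZ_meas : ∀ i, Measurable[F (ts i.castSucc)] (Z i))
    (hZ_bdd : ∀ i, ∃ C, ∀ ω, |Z i ω| ≤ C) :
    (∃ w : Ω × ℝ → ℝ, Measurable[(F t).prod inferInstance] w ∧
      ∀ᵐ x ∂(P.map L), (fun ω => w (ω, x)) =ᵐ[P]
        P[fun ω => ∑ i : Fin (n + 1),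
            Z i ω * (FM p X (ts i.succ) x ω - FM p X (ts i.castSucc) x ω)|F t]) ∧
    ∀ w : Ω × ℝ → ℝ, Measurable[(F t).prod inferInstance] w →
      (∀ᵐ x ∂(P.map L), (fun ω => w (ω, x)) =ᵐ[P]
        P[fun ω => ∑ i : Fin (n + 1),
            Z i ω * (FM p X (ts i.succ) x ω - FM p X (ts i.castSucc) x ω)|F t]) →
      (P[fun ω => ∑ i : Fin (n + 1),
          Z i ω * (if ts i.castSucc < τ ω ∧ τ ω ≤ ts i.succ then 1 else 0)|
            F t ⊔ MeasurableSpace.comap L inferInstance])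
        =ᵐ[P] fun ω => -(w (ω, L ω) / p t (L ω) ω) := by
  have hA : ∀ s, MeasurableSet[(F s).prod inferInstance] {q : Ω × ℝ | q.2 < runInf X s q.1} :=
    fun s => measurableSet_snd_lt (adapted_runInf hX_adapted hX_cont s)
  have hFM : ∀ s x ω, {q : Ω × ℝ | q.2 < runInf X s q.1}.indicator (fun q => p s q.2 q.1) (ω, x) =
      FM p X s x ω := fun s x ω => by
    simp only [FM, indicator, mem_ofPred_eq, mul_ite, mul_one, mul_zero]
  have hpayment : ∀ a b ω, ((Ioc a b).indicator 1 (τ ω) : ℝ) =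
      if a < τ ω ∧ τ ω ≤ b then 1 else 0 := fun a b ω => by
    simp only [indicator, mem_Ioc, Pi.one_apply]
  have hgeneral := full_information_recovery_term_general hL hA hτ
    (fun s => ⟨fun q => hp_nonneg s q.2 q.1, hp_meas s, hp_density s⟩)
    (fun i => hts0 ▸ hts.monotone (Fin.zero_le i.castSucc))
    (fun i => (hts i.castSucc_lt_succ).le) hZ_meas hZ_bdd
  simpa only [hFM, hpayment] using hgeneral
end
end

section
/- Let t = t_0 < t_1 < ⋯ < t_{n+1} = T and let Z_0, …, Z_n be bounded random variables with Z_i F_{t_i}-measurable. Then, P-almost surely, E_P[ Σ_{i=0}^n Z_i 1_{t_i < τ ≤ t_{i+1}} | G^D_t ] = − 1_{τ > t} · E_P[ Σ_{i=0}^n Z_i (S_{t_{i+1}} − S_{t_i}) | F^D_t ] / E_P[S_t | F^D_t], where the right-hand side is taken to be 0 on {τ ≤ t} (note that P(τ > t, E_P[S_t | F^D_t] = 0) = 0). (The recovery-payment term of the value process formula of Proposition 4.2 for stepwise recovery processes under delayed information.) -/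
open MeasureTheory ProbabilityTheory Set
open scoped NNReal Classical

noncomputable section

/-- The σ-algebra `σ({τ ≤ s} : s ≤ t)` generated by the default observations up to time
`t`. -/
def defaultSigma {Ω : Type*} (τ : Ω → ℝ≥0) (t : ℝ≥0) : MeasurableSpace Ω :=
  MeasurableSpace.generateFrom {A | ∃ s ≤ t, A = {ω | τ ω ≤ s}}

/-- The Azéma supermartingale `S_t = P(τ > t | F_t)` of `τ`. -/
def azema {Ω : Type*} [m0 : MeasurableSpace Ω] (P : Measure Ω) (F : Filtration ℝ≥0 m0)
    (τ : Ω → ℝ≥0) (t : ℝ≥0) : Ω → ℝ :=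
  P[fun ω => if t < τ ω then (1 : ℝ) else 0|F t]

/-!
Before default the observer with information `H = m ⊔ defaultSigma τ t` sees nothing beyond `m`: on
`{τ > t}` every `H`-measurable function agrees with an `m`-measurable one. Writing `E[Y|H] = g` on
`A = {τ > t}` with `g` `m`-measurable and projecting `E[1_A Y|H] = 1_A g` onto `m` gives
`E[1_A Y|m] = g P(A|m)`, which determines `g` on `A`.

The recovery payments vanish off `A`, and since `1_{s < τ ≤ u} = 1_{τ > s} - 1_{τ > u}`, projecting
them through `F s` and `F u` replaces the two survival indicators by `S_s` and `S_u`.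
-/

section CondExpOnTrace

variable {Ω : Type*} {m H m0 : MeasurableSpace Ω} {μ : Measure Ω} {A : Set Ω}

lemma exists_stronglyMeasurable_eqOn_of_comap_le {E : Type*} [Nonempty E] [TopologicalSpace E]
    [TopologicalSpace.IsCompletelyMetrizableSpace E]
    (htrace : H.comap ((↑) : A → Ω) ≤ m.comap (↑)) {f : Ω → E} (hf : StronglyMeasurable[H] f) :
    ∃ g, StronglyMeasurable[m] g ∧ EqOn f g A := by
  have hf_trace : StronglyMeasurable[m.comap ((↑) : A → Ω)] (fun ω : A => f ω) :=
    (hf.comp_measurable (comap_measurable ((↑) : A → Ω))).mono htrace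
  obtain ⟨g, hg, hfg⟩ := StronglyMeasurable.exists_eq_measurable_comp (mY := m) hf_trace
  exact ⟨g, hg, fun ω hω => congrFun hfg ⟨ω, hω⟩⟩

lemma ae_condExp_indicator_one_ne_zero_of_mem [IsFiniteMeasure μ] (hm : m ≤ m0)
    (hA : MeasurableSet A) : ∀ᵐ ω ∂μ, ω ∈ A → (μ⟦A|m⟧) ω ≠ 0 := by
  have hN : MeasurableSet[m] {ω | (μ⟦A|m⟧) ω = 0} :=
    stronglyMeasurable_condExp.measurable (measurableSet_singleton 0)
  have hnull : μ.real (A ∩ {ω | (μ⟦A|m⟧) ω = 0}) = 0 := calc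
    μ.real (A ∩ {ω | (μ⟦A|m⟧) ω = 0})
      = ∫ ω in {ω | (μ⟦A|m⟧) ω = 0}, A.indicator (fun _ => (1 : ℝ)) ω ∂μ := by
        rw [integral_indicator_const _ hA, measureReal_restrict_apply hA, smul_eq_mul, mul_one]
    _ = ∫ ω in {ω | (μ⟦A|m⟧) ω = 0}, (μ⟦A|m⟧) ω ∂μ :=
        (setIntegral_condExp hm ((integrable_const 1).indicator hA) hN).symm
    _ = 0 := setIntegral_eq_zero_of_forall_eq_zero fun _ hω => hω
  filter_upwards [measure_eq_zero_iff_ae_notMem.1 ((measureReal_eq_zero_iff).1 hnull)]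
    with ω hω hωA h0 using hω ⟨hωA, h0⟩

theorem condExp_indicator_ae_eq_of_comap_le [IsFiniteMeasure μ] {E : Type*} [NormedAddCommGroup E]
    [NormedSpace ℝ E] [CompleteSpace E] (hmH : m ≤ H) (hH : H ≤ m0) (hA : MeasurableSet[H] A)
    (htrace : H.comap ((↑) : A → Ω) ≤ m.comap (↑)) {Y : Ω → E} (hY : Integrable Y μ) :
    μ[A.indicator Y|H] =ᵐ[μ]
      A.indicator fun ω => ((μ⟦A|m⟧) ω)⁻¹ • (μ[A.indicator Y|m]) ω := by
  obtain ⟨g, hg, hYg⟩ := exists_stronglyMeasurable_eqOn_of_comap_le htrace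
    (stronglyMeasurable_condExp (f := Y) (μ := μ) (m := H))
  have hsmul : A.indicator g = A.indicator (fun _ => (1 : ℝ)) • g := by
    ext ω
    by_cases hω : ω ∈ A <;> simp [hω]
  have hH_eq : μ[A.indicator Y|H] =ᵐ[μ] A.indicator g := by
    rw [← indicator_congr hYg]
    exact condExp_indicator hY hA
  have hm_eq : μ[A.indicator Y|m] =ᵐ[μ] μ⟦A|m⟧ • g := calc
    μ[A.indicator Y|m] =ᵐ[μ] μ[μ[A.indicator Y|H]|m] := (condExp_condExp_of_le hmH hH).symm
    _ =ᵐ[μ] μ[A.indicator (fun _ => (1 : ℝ)) • g|m] := condExp_congr_ae (hsmul ▸ hH_eq)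
    _ =ᵐ[μ] μ⟦A|m⟧ • g :=
        condExp_smul_of_aestronglyMeasurable_right ((integrable_const 1).indicator (hH _ hA))
          (hsmul ▸ integrable_condExp.congr hH_eq) hg.aestronglyMeasurable
  filter_upwards [hH_eq, hm_eq, ae_condExp_indicator_one_ne_zero_of_mem (hmH.trans hH) (hH _ hA)]
    with ω hωH hωm hω0
  rw [hωH]
  by_cases hω : ω ∈ A
  · rw [indicator_of_mem hω, indicator_of_mem hω, hωm, Pi.smul_apply', inv_smul_smul₀ (hω0 hω)]
  · rw [indicator_of_notMem hω, indicator_of_notMem hω]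

end CondExpOnTrace

section DefaultSigma

variable {Ω : Type*} {τ : Ω → ℝ≥0}

lemma defaultSigma_le {m0 : MeasurableSpace Ω} (hτ : Measurable τ) (t : ℝ≥0) :
    defaultSigma τ t ≤ m0 := by
  refine MeasurableSpace.generateFrom_le ?_
  rintro _ ⟨s, -, rfl⟩
  exact measurableSet_le hτ measurable_const

lemma measurableSet_defaultSigma_preimage_Ioi (τ : Ω → ℝ≥0) (t : ℝ≥0) :
    MeasurableSet[defaultSigma τ t] (τ ⁻¹' Ioi t) := by
  have hdefault : MeasurableSet[defaultSigma τ t] (τ ⁻¹' Iic t) :=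
    MeasurableSpace.measurableSet_generateFrom ⟨t, le_rfl, rfl⟩
  simpa only [← preimage_compl, compl_Iic] using hdefault.compl

lemma comap_val_sup_defaultSigma_le (m : MeasurableSpace Ω) (τ : Ω → ℝ≥0) (t : ℝ≥0) :
    (m ⊔ defaultSigma τ t).comap ((↑) : τ ⁻¹' Ioi t → Ω) ≤ m.comap (↑) := by
  rw [MeasurableSpace.comap_le_iff_le_map]
  refine sup_le (MeasurableSpace.comap_le_iff_le_map.1 le_rfl) (MeasurableSpace.generateFrom_le ?_)
  rintro _ ⟨s, hs, rfl⟩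
  have hempty : ((↑) : τ ⁻¹' Ioi t → Ω) ⁻¹' {ω | τ ω ≤ s} = ∅ :=
    eq_empty_of_forall_notMem fun ω hω => (hs.trans_lt ω.2).not_ge hω
  exact ⟨∅, MeasurableSet.empty, hempty.symm⟩

theorem condExp_sup_defaultSigma_ae_eq {m m0 : MeasurableSpace Ω} {P : Measure Ω}
    [IsFiniteMeasure P] {E : Type*} [NormedAddCommGroup E] [NormedSpace ℝ E] [CompleteSpace E]
    (hm : m ≤ m0) (hτ : Measurable τ) {t : ℝ≥0} {Y : Ω → E} (hY : Integrable Y P)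
    (hY_supp : Function.support Y ⊆ τ ⁻¹' Ioi t) :
    P[Y|m ⊔ defaultSigma τ t] =ᵐ[P]
      (τ ⁻¹' Ioi t).indicator fun ω => ((P⟦τ ⁻¹' Ioi t|m⟧) ω)⁻¹ • (P[Y|m]) ω := by
  have hcond := condExp_indicator_ae_eq_of_comap_le le_sup_left (sup_le hm (defaultSigma_le hτ t))
    (le_sup_right (a := m) _ (measurableSet_defaultSigma_preimage_Ioi τ t))
    (comap_val_sup_defaultSigma_le m τ t) hY
  rwa [indicator_eq_self.2 hY_supp] at hcond

end DefaultSigma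

section FirstPassage

variable {Ω : Type*} [MeasurableSpace Ω] {X : ℝ≥0 → Ω → ℝ}

lemma measurable_runInf (hX : ∀ s, Measurable (X s)) (hX_cont : ∀ ω, Continuous fun s => X s ω)
    (t : ℝ≥0) : Measurable (runInf X t) := by
  obtain ⟨D, hD_countable, hD_dense⟩ := TopologicalSpace.exists_countable_dense (Icc 0 t)
  have := hD_countable.to_subtype
  have hrunInf : runInf X t = fun ω => ⨅ s : D, X s ω :=
    funext fun ω => (hD_dense.ciInf' ((hX_cont ω).comp continuous_subtype_val)).symm
  rw [hrunInf]
  exact Measurable.iInf fun s => hX s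

lemma measurable_of_lt_iff_lt_runInf (hX : ∀ s, Measurable (X s))
    (hX_cont : ∀ ω, Continuous fun s => X s ω) {L : Ω → ℝ} (hL : Measurable L) {τ : Ω → ℝ≥0}
    (hτ : ∀ θ ω, θ < τ ω ↔ L ω < runInf X θ ω) : Measurable τ :=
  measurable_of_Ioi fun θ => (Set.ext (hτ θ) : τ ⁻¹' Ioi θ = {ω | L ω < runInf X θ ω}) ▸
    measurableSet_lt hL (measurable_runInf hX hX_cont θ)

end FirstPassage

section Azema

variable {Ω : Type*} {m m0 : MeasurableSpace Ω} {P : Measure Ω} {F : Filtration ℝ≥0 m0}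
  {τ : Ω → ℝ≥0}

lemma azema_eq_condExp_indicator (P : Measure Ω) (F : Filtration ℝ≥0 m0) (τ : Ω → ℝ≥0) (t : ℝ≥0) :
    azema P F τ t = P⟦τ ⁻¹' Ioi t|F t⟧ := by
  have hind : (fun ω => if t < τ ω then (1 : ℝ) else 0) = (τ ⁻¹' Ioi t).indicator fun _ => 1 := by
    ext ω
    simp [indicator_apply]
  rw [azema, hind]

variable [IsFiniteMeasure P] {s u t : ℝ≥0} {Z : Ω → ℝ}

lemma condExp_azema (hm : m ≤ F t) : P[azema P F τ t|m] =ᵐ[P] P⟦τ ⁻¹' Ioi t|m⟧ := by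
  rw [azema_eq_condExp_indicator]
  exact condExp_condExp_of_le hm (F.le t)

lemma measure_lt_and_condExp_azema_eq_zero (hτ : Measurable τ) (hm : m ≤ F t) :
    P {ω | t < τ ω ∧ (P[azema P F τ t|m]) ω = 0} = 0 := by
  refine measure_eq_zero_iff_ae_notMem.2 ?_
  filter_upwards [condExp_azema hm,
    ae_condExp_indicator_one_ne_zero_of_mem (hm.trans (F.le t)) (hτ measurableSet_Ioi)]
    with ω hSω hne ⟨hω, h0⟩ using hne hω (hSω ▸ h0)

lemma mul_azema_ae_eq_condExp (hτ : Measurable τ) (hZ : StronglyMeasurable[F t] Z)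
    (hZ_int : Integrable Z P) : Z * azema P F τ t =ᵐ[P] P[(τ ⁻¹' Ioi t).indicator Z|F t] := by
  have hmul : (τ ⁻¹' Ioi t).indicator Z = Z * (τ ⁻¹' Ioi t).indicator fun _ => 1 := by
    ext ω
    simp [indicator_apply]
  rw [azema_eq_condExp_indicator, hmul]
  exact (condExp_mul_of_stronglyMeasurable_left hZ
    (hmul ▸ hZ_int.indicator (hτ measurableSet_Ioi))
    ((integrable_const 1).indicator (hτ measurableSet_Ioi))).symm

lemma integrable_mul_azema (hτ : Measurable τ) (hZ : StronglyMeasurable[F t] Z)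
    (hZ_int : Integrable Z P) : Integrable (Z * azema P F τ t) P :=
  integrable_condExp.congr (mul_azema_ae_eq_condExp hτ hZ hZ_int).symm

lemma condExp_mul_azema (hτ : Measurable τ) (hm : m ≤ F t) (hZ : StronglyMeasurable[F t] Z)
    (hZ_int : Integrable Z P) :
    P[Z * azema P F τ t|m] =ᵐ[P] P[(τ ⁻¹' Ioi t).indicator Z|m] :=
  (condExp_congr_ae (mul_azema_ae_eq_condExp hτ hZ hZ_int)).trans
    (condExp_condExp_of_le hm (F.le t))

lemma condExp_mul_azema_sub_azema (hτ : Measurable τ) (hsu : s ≤ u) (hm : m ≤ F s)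
    (hZ : StronglyMeasurable[F s] Z) (hZ_int : Integrable Z P) :
    P[Z * (azema P F τ u - azema P F τ s)|m] =ᵐ[P] -P[(τ ⁻¹' Ioc s u).indicator Z|m] := by
  have hZu : StronglyMeasurable[F u] Z := hZ.mono (F.mono hsu)
  have hIoc : (τ ⁻¹' Ioc s u).indicator Z =
      (τ ⁻¹' Ioi s).indicator Z - (τ ⁻¹' Ioi u).indicator Z := by
    rw [← Ioi_sdiff_Ioi, preimage_sdiff, indicator_sdiff (preimage_mono (Ioi_subset_Ioi hsu))]
  calc P[Z * (azema P F τ u - azema P F τ s)|m]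
      =ᵐ[P] P[Z * azema P F τ u|m] - P[Z * azema P F τ s|m] := by
        rw [mul_sub]
        exact condExp_sub (integrable_mul_azema hτ hZu hZ_int)
          (integrable_mul_azema hτ hZ hZ_int) m
    _ =ᵐ[P] P[(τ ⁻¹' Ioi u).indicator Z|m] - P[(τ ⁻¹' Ioi s).indicator Z|m] :=
        (condExp_mul_azema hτ (hm.trans (F.mono hsu)) hZu hZ_int).sub
          (condExp_mul_azema hτ hm hZ hZ_int)
    _ =ᵐ[P] -P[(τ ⁻¹' Ioc s u).indicator Z|m] := by
        rw [hIoc, ← neg_sub]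
        exact (condExp_sub (hZ_int.indicator (hτ measurableSet_Ioi))
          (hZ_int.indicator (hτ measurableSet_Ioi)) m).neg.symm

lemma condExp_sum_mul_azema_sub_azema {ι : Type*} {I : Finset ι} {s u : ι → ℝ≥0}
    {Z : ι → Ω → ℝ} (hτ : Measurable τ) (hsu : ∀ i ∈ I, s i ≤ u i) (hm : ∀ i ∈ I, m ≤ F (s i))
    (hZ : ∀ i ∈ I, StronglyMeasurable[F (s i)] (Z i)) (hZ_int : ∀ i ∈ I, Integrable (Z i) P) :
    P[∑ i ∈ I, Z i * (azema P F τ (u i) - azema P F τ (s i))|m] =ᵐ[P]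
      -P[∑ i ∈ I, (τ ⁻¹' Ioc (s i) (u i)).indicator (Z i)|m] := by
  have hint : ∀ i ∈ I, Integrable (Z i * (azema P F τ (u i) - azema P F τ (s i))) P := by
    intro i hi
    rw [mul_sub]
    exact (integrable_mul_azema hτ ((hZ i hi).mono (F.mono (hsu i hi))) (hZ_int i hi)).sub
      (integrable_mul_azema hτ (hZ i hi) (hZ_int i hi))
  calc P[∑ i ∈ I, Z i * (azema P F τ (u i) - azema P F τ (s i))|m]
      =ᵐ[P] ∑ i ∈ I, P[Z i * (azema P F τ (u i) - azema P F τ (s i))|m] :=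
        condExp_finsetSum hint m
    _ =ᵐ[P] ∑ i ∈ I, -P[(τ ⁻¹' Ioc (s i) (u i)).indicator (Z i)|m] :=
        eventuallyEq_sum fun i hi =>
          condExp_mul_azema_sub_azema hτ (hsu i hi) (hm i hi) (hZ i hi) (hZ_int i hi)
    _ =ᵐ[P] -P[∑ i ∈ I, (τ ⁻¹' Ioc (s i) (u i)).indicator (Z i)|m] := by
        rw [Finset.sum_neg_distrib]
        exact (condExp_finsetSum
          (fun i hi => (hZ_int i hi).indicator (hτ measurableSet_Ioc)) m).neg.symm

end Azema

theorem delayed_information_recovery_term_general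
    {Ω : Type*} {m m0 : MeasurableSpace Ω} {P : Measure Ω} [IsFiniteMeasure P]
    {F : Filtration ℝ≥0 m0} {τ : Ω → ℝ≥0} (hτ : Measurable τ) {t : ℝ≥0} (hm : m ≤ F t)
    {ι : Type*} {I : Finset ι} {s u : ι → ℝ≥0} (hts : ∀ i ∈ I, t ≤ s i)
    (hsu : ∀ i ∈ I, s i ≤ u i) {Z : ι → Ω → ℝ}
    (hZ : ∀ i ∈ I, StronglyMeasurable[F (s i)] (Z i)) (hZ_int : ∀ i ∈ I, Integrable (Z i) P) :
    P {ω | t < τ ω ∧ (P[azema P F τ t|m]) ω = 0} = 0 ∧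
    (P[fun ω => ∑ i ∈ I, Z i ω * (if s i < τ ω ∧ τ ω ≤ u i then 1 else 0)|
        m ⊔ defaultSigma τ t]) =ᵐ[P]
      fun ω => if t < τ ω then
        -((P[fun ω' => ∑ i ∈ I, Z i ω' * (azema P F τ (u i) ω' - azema P F τ (s i) ω')|m]) ω
          / (P[azema P F τ t|m]) ω)
      else 0 := by
  refine ⟨measure_lt_and_condExp_azema_eq_zero hτ hm, ?_⟩
  set Y : Ω → ℝ := ∑ i ∈ I, (τ ⁻¹' Ioc (s i) (u i)).indicator (Z i) with hY
  have hpayment : (fun ω => ∑ i ∈ I, Z i ω * (if s i < τ ω ∧ τ ω ≤ u i then 1 else 0)) = Y := by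
    ext ω
    simp [hY, indicator_apply]
  have hcompensator :
      (fun ω => ∑ i ∈ I, Z i ω * (azema P F τ (u i) ω - azema P F τ (s i) ω)) =
        ∑ i ∈ I, Z i * (azema P F τ (u i) - azema P F τ (s i)) := by
    ext ω
    simp
  have hY_int : Integrable Y P :=
    integrable_finsetSum' I fun i hi => (hZ_int i hi).indicator (hτ measurableSet_Ioc)
  have hY_supp : Function.support Y ⊆ τ ⁻¹' Ioi t := by
    intro ω hω
    rw [hY, Function.mem_support, Finset.sum_apply] at hω
    obtain ⟨i, hi, hωi⟩ := Finset.exists_ne_zero_of_sum_ne_zero hω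
    exact (hts i hi).trans_lt (mem_of_indicator_ne_zero hωi).1
  rw [hpayment, hcompensator]
  filter_upwards [condExp_sup_defaultSigma_ae_eq (hm.trans (F.le t)) hτ hY_int hY_supp,
    condExp_azema hm, condExp_sum_mul_azema_sub_azema hτ hsu
      (fun i hi => hm.trans (F.mono (hts i hi))) hZ hZ_int] with ω hYω hSω hWω
  rw [hYω, hSω, hWω, Pi.neg_apply, neg_div, neg_neg, div_eq_inv_mul, indicator_apply]
  rfl

/-- **Recovery-payment term of Proposition 4.2.** For a partition
`t = t_0 < t_1 < ⋯ < t_{n+1} = T` and bounded `F_{t_i}`-measurable `Z_i`, `P`-a.s.,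
`E_P[Σ_i Z_i 1_{t_i < τ ≤ t_{i+1}} | G^D_t] = − 1_{τ > t} E_P[Σ_i Z_i (S_{t_{i+1}} −
S_{t_i}) | F^D_t] / E_P[S_t | F^D_t]` (the right-hand side being `0` on `{τ ≤ t}`, and
`P(τ > t, E[S_t|F^D_t] = 0) = 0`). -/
theorem delayed_information_recovery_term
    {Ω : Type*} [m0 : MeasurableSpace Ω] {P : Measure Ω} [IsProbabilityMeasure P]
    (F : Filtration ℝ≥0 m0)
    (X : ℝ≥0 → Ω → ℝ) (hX_adapted : Adapted F X)
    (hX_cont : ∀ ω, Continuous fun s => X s ω)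
    (L : Ω → ℝ) (hL : Measurable L)
    (hX0 : ∀ᵐ ω ∂P, L ω < X 0 ω)
    (τ : Ω → ℝ≥0)
    (hτ : ∀ (θ : ℝ≥0) (ω : Ω), θ < τ ω ↔ L ω < runInf X θ ω)
    -- the delayed default-free filtration, a sub-filtration of `F`
    (FD : Filtration ℝ≥0 m0) (hFD : ∀ s, FD s ≤ F s)
    -- the partition `t = t_0 < t_1 < ⋯ < t_{n+1} = T` and the stepwise recovery payments
    (n : ℕ) (ts : Fin (n + 2) → ℝ≥0) (hts : StrictMono ts)
    (t T : ℝ≥0) (hts0 : ts 0 = t) (htsT : ts (Fin.last (n + 1)) = T)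
    (Z : Fin (n + 1) → Ω → ℝ)
    (hZ_meas : ∀ i, Measurable[F (ts i.castSucc)] (Z i))
    (hZ_bdd : ∀ i, ∃ C, ∀ ω, |Z i ω| ≤ C) :
    P {ω | t < τ ω ∧ (P[azema P F τ t|FD t]) ω = 0} = 0 ∧
    (P[fun ω => ∑ i : Fin (n + 1),
        Z i ω * (if ts i.castSucc < τ ω ∧ τ ω ≤ ts i.succ then 1 else 0)|
          FD t ⊔ defaultSigma τ t]) =ᵐ[P]
      fun ω => if t < τ ω then
        -((P[fun ω' => ∑ i : Fin (n + 1),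
            Z i ω' * (azema P F τ (ts i.succ) ω' - azema P F τ (ts i.castSucc) ω')|FD t]) ω
          / (P[azema P F τ t|FD t]) ω)
      else 0 := by
  subst hts0
  choose C hC using hZ_bdd
  exact delayed_information_recovery_term_general
    (measurable_of_lt_iff_lt_runInf (fun s => (hX_adapted s).mono (F.le s) le_rfl) hX_cont hL hτ)
    (hFD _) (fun i _ => hts.monotone (Fin.zero_le _)) (fun i _ => hts.monotone i.castSucc_le_succ)
    (fun i _ => (hZ_meas i).stronglyMeasurable)
    (fun i _ => .of_bound ((hZ_meas i).mono (F.le _) le_rfl).aestronglyMeasurable (C i)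
      (.of_forall (hC i)))
end
end

section
/- Under Jacod's density hypothesis and the noisy-barrier setup, for all 0 ≤ t ≤ θ and every bounded F_θ-measurable random variable φ_θ, let v : Ω × ℝ → ℝ be F_t ⊗ B(ℝ)-measurable and such that for P^L-almost every l, v(·,l) is a version of E_P[φ_θ p_θ(l) 1_{X*_θ > l} | F_t]. Then the random variable D_t := ∫_ℝ p_t(l) q_t(L_t − l) P^L(dl) is P-a.s. strictly positive and, P-almost surely, E_P[φ_θ 1_{τ > θ} | F^I_t] · D_t = ∫_ℝ v(·,l) q_t(L_t − l) P^L(dl). (Second formula of Proposition 5.1.) -/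
open MeasureTheory ProbabilityTheory Set
open scoped NNReal Classical

noncomputable section

/-- The insider's default-free σ-algebra `F^I_t = F_t ∨ σ(L_s = L + ε_s : s ≤ t)`. -/
def insiderSigma {Ω : Type*} [m0 : MeasurableSpace Ω] (F : Filtration ℝ≥0 m0)
    (L : Ω → ℝ) (ε : ℝ≥0 → Ω → ℝ) (t : ℝ≥0) : MeasurableSpace Ω :=
  F t ⊔ ⨆ s ∈ Set.Iic t, MeasurableSpace.comap (fun ω => L ω + ε s ω) inferInstance

/-!
Call `f` the density of `X` weighted by `Y` when it is the density of the signed measure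
`G ↦ E[Y; X ∈ G]`. Jacod's hypothesis says that `p_θ` is the density of `(F_θ, L)` with respect to
`P ⊗ P^L`, so `Y(·, l) p_θ(l)` is the one weighted by the payoff `Y(·, L)`, and replacing it by its
conditional expectations `v(·, l)` given `F_t` gives the weighted density of `(F_t, L)`. The noise
`ε_t` and its past increments are independent of these and of each other; adjoining them multiplies
the density by `q_t(ε_t)`, and after the measure-preserving shear `(l, e) ↦ (l, l + e)` one
integrates out `l`. Since `F^I_t` is generated by `F_t`, `L_t` and the past increments of the noise,
`∫ v(·, l) q_t(L_t - l) P^L(dl)` is the density of `F^I_t` weighted by the payoff, and `D_t` is the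
same with weight `1`. A conditional expectation is the quotient of these two densities.
-/

theorem setIntegral_prod_symm {α β E : Type*} [MeasurableSpace α] [MeasurableSpace β]
    [NormedAddCommGroup E] [NormedSpace ℝ E] {μ : Measure α} {ν : Measure β} [SFinite μ] [SFinite ν]
    {f : α × β → E} {s : Set α} {t : Set β} (hf : IntegrableOn f (s ×ˢ t) (μ.prod ν)) :
    ∫ z in s ×ˢ t, f z ∂(μ.prod ν) = ∫ y in t, ∫ x in s, f (x, y) ∂μ ∂ν := by
  rw [IntegrableOn, ← Measure.prod_restrict] at hf
  rw [← Measure.prod_restrict, integral_prod_symm _ hf]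

theorem measurePreserving_shear {A G N : Type*} [MeasurableSpace A] [AddGroup G]
    [MeasurableSpace G] [MeasurableAdd₂ G] [MeasurableSpace N]
    (μ : Measure A) [SFinite μ] (ν η : Measure G) [SFinite ν] [SFinite η] [η.IsAddLeftInvariant]
    (κ : Measure N) [SFinite κ] :
    MeasurePreserving (fun z : (A × G) × (G × N) => ((z.1.1, (z.1.2 + z.2.1, z.2.2)), z.1.2))
      ((μ.prod ν).prod (η.prod κ)) ((μ.prod (η.prod κ)).prod ν) := by
  have htranslate : MeasurePreserving
      (fun z : (A × G) × (G × N) => (z.1, (z.1.2 + z.2.1, z.2.2)))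
      ((μ.prod ν).prod (η.prod κ)) ((μ.prod ν).prod (η.prod κ)) :=
    (MeasurePreserving.id _).skew_product (g := fun (z : A × G) (b : G × N) => (z.2 + b.1, b.2))
      (by fun_prop) <| ae_of_all _ fun z =>
      ((measurePreserving_add_left η z.2).prod (MeasurePreserving.id κ)).map_eq
  exact (measurePreserving_prodAssoc μ (η.prod κ) ν).symm.comp <|
    ((MeasurePreserving.id μ).prod Measure.measurePreserving_swap).comp <|
      (measurePreserving_prodAssoc μ ν (η.prod κ)).comp htranslate

theorem integrable_prod_of_condExp {Ω E E' Λ : Type*} {m0 : MeasurableSpace Ω}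
    [MeasurableSpace E] [MeasurableSpace E'] [MeasurableSpace Λ] {P : Measure Ω}
    [IsFiniteMeasure P] {X : Ω → E} {π : E → E'} {ν : Measure Λ} [SFinite ν] {f : E × Λ → ℝ}
    {v : E' × Λ → ℝ} (hX : Measurable X) (hπ : Measurable π)
    (hf : Integrable f ((P.map X).prod ν)) (hv : Measurable v)
    (hcond : ∀ᵐ l ∂ν, (fun ω => v (π (X ω), l)) =ᵐ[P]
      P[fun ω => f (X ω, l) | MeasurableSpace.comap (fun ω => π (X ω)) inferInstance]) :
    Integrable v ((P.map fun ω => π (X ω)).prod ν) := by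
  have hπX : Measurable fun ω => π (X ω) := hπ.comp hX
  have hvl (l : Λ) : Measurable fun x => v (x, l) := hv.comp measurable_prodMk_right
  refine (integrable_prod_iff' hv.aestronglyMeasurable).2
    ⟨?_, hf.integral_norm_prod_right.mono'
      hv.stronglyMeasurable.norm.integral_prod_left'.aestronglyMeasurable ?_⟩
  · filter_upwards [hcond] with l hl
    rw [integrable_map_measure (hvl l).aestronglyMeasurable hπX.aemeasurable]
    exact integrable_condExp.congr hl.symm
  · filter_upwards [hcond, hf.prod_left_ae] with l hl hfl
    have hnorm := integral_congr_ae (hl.fun_comp norm)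
    rw [Real.norm_of_nonneg (integral_nonneg fun _ => norm_nonneg _),
      integral_map hπX.aemeasurable (hvl l).norm.aestronglyMeasurable,
      integral_map hX.aemeasurable hfl.norm.aestronglyMeasurable]
    exact hnorm.trans_le (integral_abs_condExp_le _)

/-- `f` is the density with respect to `m` of the law of `X` weighted by `Y`, that is, of the
signed measure `G ↦ E[Y; X ∈ G]`. For `Y = 1` it is the density of the law of `X`. All integrability
needed for the set integrals not to take junk values is part of the definition. -/
structure HasWeightedDensity {Ω E : Type*} [MeasurableSpace Ω] [MeasurableSpace E]
    (P : Measure Ω) (Y : Ω → ℝ) (X : Ω → E) (f : E → ℝ) (m : Measure E) : Prop where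
  measurable : Measurable X
  integrable_weight : Integrable Y P
  integrable : Integrable f m
  setIntegral_preimage : ∀ ⦃G⦄, MeasurableSet G → ∫ ω in X ⁻¹' G, Y ω ∂P = ∫ x in G, f x ∂m

namespace HasWeightedDensity

variable {Ω E E' N Λ : Type*} {m0 : MeasurableSpace Ω} [mE : MeasurableSpace E]
  [MeasurableSpace E'] [MeasurableSpace N] [MeasurableSpace Λ]
  {P : Measure Ω} {Y : Ω → ℝ} {X : Ω → E} {f g : E → ℝ} {m : Measure E}

theorem of_map_eq_withDensity [IsFiniteMeasure P] (hX : Measurable X) (hf : Measurable f)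
    (hf_nonneg : 0 ≤ f) (h : P.map X = m.withDensity fun x => ENNReal.ofReal (f x)) :
    HasWeightedDensity P 1 X f m := by
  have hmass {G : Set E} (hG : MeasurableSet G) :
      ∫⁻ x in G, ENNReal.ofReal (f x) ∂m = P (X ⁻¹' G) := by
    rw [← withDensity_apply _ hG, ← h, Measure.map_apply hX hG]
  refine ⟨hX, integrable_const 1, ?_, fun G hG => ?_⟩
  · rw [← lintegral_ofReal_ne_top_iff_integrable hf.aestronglyMeasurable (ae_of_all _ hf_nonneg),
      ← setLIntegral_univ, hmass .univ]
    exact measure_ne_top P _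
  · rw [integral_eq_lintegral_of_nonneg_ae (ae_of_all _ hf_nonneg) hf.aestronglyMeasurable,
      hmass hG]
    simp [Measure.real]

theorem one_map [IsFiniteMeasure P] (hX : Measurable X) :
    HasWeightedDensity P 1 X 1 (P.map X) :=
  of_map_eq_withDensity hX measurable_one (fun _ => zero_le_one) (by simp)

theorem ae_nonneg (h : HasWeightedDensity P 1 X f m) : 0 ≤ᵐ[m] f := by
  refine ae_nonneg_of_forall_setIntegral_nonneg h.integrable fun G hG _ => ?_
  rw [← h.setIntegral_preimage hG]
  exact integral_nonneg fun _ => zero_le_one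

theorem map_eq_withDensity [IsFiniteMeasure P] (h : HasWeightedDensity P 1 X f m) :
    P.map X = m.withDensity fun x => ENNReal.ofReal (f x) := by
  ext G hG
  rw [Measure.map_apply h.measurable hG, withDensity_apply _ hG,
    ← ofReal_integral_eq_lintegral_ofReal h.integrable.integrableOn
      (ae_restrict_of_ae h.ae_nonneg), ← h.setIntegral_preimage hG]
  simp

theorem ae_pos [IsFiniteMeasure P] (h : HasWeightedDensity P 1 X f m) :
    ∀ᵐ ω ∂P, 0 < f (X ω) := by
  refine ae_of_ae_map (p := fun x => 0 < f x) h.measurable.aemeasurable ?_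
  rw [h.map_eq_withDensity,
    ae_withDensity_iff' h.integrable.aestronglyMeasurable.aemeasurable.ennreal_ofReal]
  exact ae_of_all _ fun x hx => ENNReal.ofReal_pos.1 (pos_iff_ne_zero.2 hx)

theorem mul_comp [IsFiniteMeasure P] {k : E → ℝ} (h : HasWeightedDensity P 1 X f m)
    (hk : Measurable k) (hkX : Integrable (fun ω => k (X ω)) P) :
    HasWeightedDensity P (fun ω => k (X ω)) X (fun x => k x * f x) m := by
  have hf : AEMeasurable (fun x => (f x).toNNReal) m :=
    h.integrable.aestronglyMeasurable.aemeasurable.real_toNNReal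
  have hdens : (fun x => (f x).toNNReal • k x) =ᵐ[m] fun x => k x * f x := by
    filter_upwards [h.ae_nonneg] with x hx
    rw [NNReal.smul_def, Real.coe_toNNReal _ hx, smul_eq_mul, mul_comm]
  have hlaw : P.map X = m.withDensity fun x => ((f x).toNNReal : ENNReal) := h.map_eq_withDensity
  refine ⟨h.measurable, hkX, ?_, fun G hG => ?_⟩
  · rw [← integrable_congr hdens, ← integrable_withDensity_iff_integrable_smul₀ hf, ← hlaw]
    exact (integrable_map_measure hk.aestronglyMeasurable h.measurable.aemeasurable).2 hkX
  · rw [← setIntegral_map hG hk.aestronglyMeasurable h.measurable.aemeasurable, hlaw,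
      setIntegral_withDensity_eq_setIntegral_smul₀ hf.restrict _ hG]
    exact integral_congr_ae (ae_restrict_of_ae hdens)

theorem ae_eq (hf : HasWeightedDensity P Y X f m) (hg : HasWeightedDensity P Y X g m) :
    f =ᵐ[m] g :=
  Integrable.ae_eq_of_forall_setIntegral_eq f g hf.integrable hg.integrable fun _ hG _ =>
    (hf.setIntegral_preimage hG).symm.trans (hg.setIntegral_preimage hG)

-- By Doob's factorization `E[Y | σ(X)] = k ∘ X`, and then both `k * f` and `g` are densities of
-- `G ↦ E[Y; X ∈ G]`.
theorem condExp_mul_eq [IsFiniteMeasure P] (hf : HasWeightedDensity P 1 X f m)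
    (hg : HasWeightedDensity P Y X g m) :
    ∀ᵐ ω ∂P, (P[Y | mE.comap X]) ω * f (X ω) = g (X ω) := by
  have hX := hf.measurable
  obtain ⟨k, hk, hkX⟩ :=
    (stronglyMeasurable_condExp (m := mE.comap X) (μ := P) (f := Y)).exists_eq_measurable_comp
  have hkf := hf.mul_comp hk.measurable (integrable_condExp.congr (.of_eq hkX))
  have hkf' : HasWeightedDensity P Y X (fun x => k x * f x) m := by
    refine ⟨hX, hg.integrable_weight, hkf.integrable, fun G hG => ?_⟩
    rw [← hkf.setIntegral_preimage hG,
      ← setIntegral_condExp hX.comap_le hg.integrable_weight ⟨G, hG, rfl⟩, hkX]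
    rfl
  have hac : P.map X ≪ m := hf.map_eq_withDensity ▸ withDensity_absolutelyContinuous _ _
  filter_upwards [ae_of_ae_map hX.aemeasurable (hac.ae_le (hkf'.ae_eq hg))] with ω hω
  rw [hkX]
  exact hω

theorem comp_measurePreserving {m' : Measure E'} {φ : E → E'} {g : E' → ℝ}
    (hφ : MeasurePreserving φ m m') (hg : AEStronglyMeasurable g m')
    (h : HasWeightedDensity P Y X (g ∘ φ) m) :
    HasWeightedDensity P Y (φ ∘ X) g m' := by
  refine ⟨hφ.measurable.comp h.measurable, h.integrable_weight,
    (hφ.integrable_comp hg).1 h.integrable, fun G hG => ?_⟩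
  rw [preimage_comp, h.setIntegral_preimage (hφ.measurable hG), ← hφ.map_eq,
    setIntegral_map hG (by rwa [hφ.map_eq]) hφ.measurable.aemeasurable]
  rfl

theorem of_setIntegral_prod {T : Ω → N} {f : E × N → ℝ} {m : Measure (E × N)}
    (hX : Measurable X) (hT : Measurable T) (hY : Integrable Y P) (hf : Integrable f m)
    (h : ∀ A B, MeasurableSet A → MeasurableSet B →
      ∫ ω in X ⁻¹' A ∩ T ⁻¹' B, Y ω ∂P = ∫ z in A ×ˢ B, f z ∂m) :
    HasWeightedDensity P Y (fun ω => (X ω, T ω)) f m := by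
  have hXT := hX.prodMk hT
  refine ⟨hXT, hY, hf, fun G hG => ?_⟩
  have hmap {G : Set (E × N)} (hG : MeasurableSet G) :
      (P.withDensityᵥ Y).map (fun ω => (X ω, T ω)) G =
        ∫ ω in (fun ω => (X ω, T ω)) ⁻¹' G, Y ω ∂P := by
    rw [VectorMeasure.map_apply _ hXT hG, withDensityᵥ_apply hY (hXT hG)]
  have hrect {A : Set E} {B : Set N} (hA : MeasurableSet A) (hB : MeasurableSet B) :
      (P.withDensityᵥ Y).map (fun ω => (X ω, T ω)) (A ×ˢ B) = m.withDensityᵥ f (A ×ˢ B) := by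
    rw [hmap (hA.prod hB), withDensityᵥ_apply hf (hA.prod hB), ← h A B hA hB, mk_preimage_prod]
  have heq : (P.withDensityᵥ Y).map (fun ω => (X ω, T ω)) = m.withDensityᵥ f := by
    refine VectorMeasure.ext_of_generateFrom _ ?_ generateFrom_prod.symm isPiSystem_prod ?_
    · rintro _ ⟨A, hA, B, hB, rfl⟩
      exact hrect hA hB
    · rw [← univ_prod_univ]
      exact hrect .univ .univ
  rw [← hmap hG, heq, withDensityᵥ_apply hf hG]

theorem fst {T : Ω → N} {ν : Measure N} [SFinite m] [SFinite ν] {f : E × N → ℝ}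
    (h : HasWeightedDensity P Y (fun ω => (X ω, T ω)) f (m.prod ν)) :
    HasWeightedDensity P Y X (fun x => ∫ n, f (x, n) ∂ν) m := by
  refine ⟨measurable_fst.comp h.measurable, h.integrable_weight, h.integrable.integral_prod_left,
    fun G hG => ?_⟩
  have hGuniv := h.setIntegral_preimage (hG.prod .univ)
  rw [mk_preimage_prod, preimage_univ, inter_univ, setIntegral_prod _ h.integrable.integrableOn]
    at hGuniv
  simpa only [Measure.restrict_univ] using hGuniv

theorem prodMk_indepFun {T : Ω → N} {q : N → ℝ} {η : Measure N} [SFinite m] [SFinite η]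
    (hX : HasWeightedDensity P Y X f m) (hT : HasWeightedDensity P 1 T q η)
    (hind : IndepFun (fun ω => (Y ω, X ω)) T P) :
    HasWeightedDensity P Y (fun ω => (X ω, T ω)) (fun z => f z.1 * q z.2) (m.prod η) := by
  refine of_setIntegral_prod hX.measurable hT.measurable hX.integrable_weight
    (hX.integrable.mul_prod hT.integrable) fun A B hA hB => ?_
  have hYA : Measurable fun z : ℝ × E => A.indicator 1 z.2 * z.1 :=
    ((measurable_one.indicator hA).comp measurable_snd).mul measurable_fst
  have hfactor := hind.integral_fun_comp_mul_comp
    (hX.integrable_weight.aemeasurable.prodMk hX.measurable.aemeasurable)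
    hT.measurable.aemeasurable hYA.aestronglyMeasurable
    (measurable_one.indicator hB : Measurable (B.indicator (1 : N → ℝ))).aestronglyMeasurable
  calc ∫ ω in X ⁻¹' A ∩ T ⁻¹' B, Y ω ∂P
      = ∫ ω, A.indicator 1 (X ω) * Y ω * B.indicator 1 (T ω) ∂P := by
        rw [← integral_indicator ((hX.measurable hA).inter (hT.measurable hB))]
        congr 1 with ω
        by_cases hωA : X ω ∈ A <;> by_cases hωB : T ω ∈ B <;> simp [hωA, hωB]
    _ = (∫ ω in X ⁻¹' A, Y ω ∂P) * ∫ ω in T ⁻¹' B, 1 ∂P := by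
        rw [hfactor, ← integral_indicator (hX.measurable hA),
          ← integral_indicator (hT.measurable hB)]
        congr 2 with ω
        · by_cases hωA : X ω ∈ A <;> simp [hωA]
    _ = ∫ z in A ×ˢ B, f z.1 * q z.2 ∂(m.prod η) := by
        rw [hX.setIntegral_preimage hA, setIntegral_prod_mul, ← hT.setIntegral_preimage hB]
        rfl

theorem of_condExp_indicator [IsFiniteMeasure P] {L : Ω → Λ} {ν : Measure Λ} [SFinite ν]
    {p : E × Λ → ℝ} (hX : Measurable X) (hL : Measurable L) (hp : Measurable p) (hp_nonneg : 0 ≤ p)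
    (hcond : ∀ B, MeasurableSet B →
      P⟦L ⁻¹' B | mE.comap X⟧ =ᵐ[P] fun ω => ∫ l in B, p (X ω, l) ∂ν) :
    HasWeightedDensity P 1 (fun ω => (X ω, L ω)) p ((P.map X).prod ν) := by
  have hmass : ∀ᵐ x ∂(P.map X), ∫ l, p (x, l) ∂ν = 1 := by
    rw [ae_map_iff hX.aemeasurable (measurableSet_eq_fun
      hp.stronglyMeasurable.integral_prod_right'.measurable measurable_const)]
    filter_upwards [hcond univ .univ] with _ hω
    simpa [condExp_const hX.comap_le, eq_comm] using hω
  have hp_int : Integrable p ((P.map X).prod ν) := by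
    refine (integrable_prod_iff hp.aestronglyMeasurable).2 ⟨?_, (integrable_const 1).congr ?_⟩
    · filter_upwards [hmass] with x hx
      exact .of_integral_ne_zero (hx ▸ one_ne_zero)
    · filter_upwards [hmass] with x hx
      simp_rw [Real.norm_of_nonneg (hp_nonneg _), hx]
  refine of_setIntegral_prod hX hL (integrable_const 1) hp_int fun A B hA hB => ?_
  calc ∫ _ in X ⁻¹' A ∩ L ⁻¹' B, (1 : ℝ) ∂P
      = ∫ ω in X ⁻¹' A, (L ⁻¹' B).indicator (fun _ => 1) ω ∂P :=
        (setIntegral_indicator (hL hB)).symm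
    _ = ∫ ω in X ⁻¹' A, ∫ l in B, p (X ω, l) ∂ν ∂P := by
        rw [← setIntegral_condExp hX.comap_le ((integrable_const 1).indicator (hL hB))
          ⟨A, hA, rfl⟩]
        exact integral_congr_ae (ae_restrict_of_ae (hcond B hB))
    _ = ∫ z in A ×ˢ B, p z ∂((P.map X).prod ν) := by
        rw [setIntegral_prod _ hp_int.integrableOn, setIntegral_map hA
          hp.stronglyMeasurable.integral_prod_right'.aestronglyMeasurable hX.aemeasurable]

theorem comp_of_condExp [IsFiniteMeasure P] {π : E → E'} {L : Ω → Λ} {ν : Measure Λ} [SFinite ν]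
    {f : E × Λ → ℝ} {v : E' × Λ → ℝ} (hX : Measurable X) (hπ : Measurable π)
    (h : HasWeightedDensity P Y (fun ω => (X ω, L ω)) f ((P.map X).prod ν)) (hv : Measurable v)
    (hcond : ∀ᵐ l ∂ν, (fun ω => v (π (X ω), l)) =ᵐ[P]
      P[fun ω => f (X ω, l) | MeasurableSpace.comap (fun ω => π (X ω)) inferInstance]) :
    HasWeightedDensity P Y (fun ω => (π (X ω), L ω)) v
      ((P.map fun ω => π (X ω)).prod ν) := by
  have hπX : Measurable fun ω => π (X ω) := hπ.comp hX
  have hvl (l : Λ) : Measurable fun x => v (x, l) := hv.comp measurable_prodMk_right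
  have hv_int := integrable_prod_of_condExp hX hπ h.integrable hv hcond
  refine of_setIntegral_prod hπX (measurable_snd.comp h.measurable) h.integrable_weight hv_int
    fun A B hA hB => ?_
  have hfibre : ∀ᵐ l ∂ν, ∫ x in π ⁻¹' A, f (x, l) ∂(P.map X) =
      ∫ x in A, v (x, l) ∂(P.map fun ω => π (X ω)) := by
    filter_upwards [hcond, h.integrable.prod_left_ae] with l hl hfl
    have hfX : Integrable (fun ω => f (X ω, l)) P :=
      (integrable_map_measure hfl.aestronglyMeasurable hX.aemeasurable).1 hfl
    rw [setIntegral_map (hπ hA) hfl.aestronglyMeasurable hX.aemeasurable,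
      setIntegral_map hA (hvl l).aestronglyMeasurable hπX.aemeasurable,
      integral_congr_ae (ae_restrict_of_ae hl), setIntegral_condExp hπX.comap_le hfX ⟨A, hA, rfl⟩]
    rfl
  calc ∫ ω in (fun ω => π (X ω)) ⁻¹' A ∩ L ⁻¹' B, Y ω ∂P
      = ∫ z in (π ⁻¹' A) ×ˢ B, f z ∂((P.map X).prod ν) :=
        h.setIntegral_preimage ((hπ hA).prod hB)
    _ = ∫ l in B, ∫ x in π ⁻¹' A, f (x, l) ∂(P.map X) ∂ν :=
        setIntegral_prod_symm h.integrable.integrableOn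
    _ = ∫ l in B, ∫ x in A, v (x, l) ∂(P.map fun ω => π (X ω)) ∂ν :=
        integral_congr_ae (ae_restrict_of_ae hfibre)
    _ = ∫ z in A ×ˢ B, v z ∂((P.map fun ω => π (X ω)).prod ν) :=
        (setIntegral_prod_symm hv_int.integrableOn).symm

theorem add_indepFun {G : Type*} [AddCommGroup G] [MeasurableSpace G] [MeasurableAdd₂ G]
    [MeasurableSub₂ G] [IsFiniteMeasure P] [SFinite m] {ν η : Measure G} [SFinite ν] [SFinite η]
    [η.IsAddLeftInvariant] {L e : Ω → G} {M : Ω → N} {f : E × G → ℝ} {q : G → ℝ}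
    (h : HasWeightedDensity P Y (fun ω => (X ω, L ω)) f (m.prod ν)) (hf : Measurable f)
    (he : HasWeightedDensity P 1 e q η) (hq : Measurable q) (hM : Measurable M)
    (heM : IndepFun e M P)
    (hind : IndepFun (fun ω => (Y ω, (X ω, L ω))) (fun ω => (e ω, M ω)) P) :
    HasWeightedDensity P Y (fun ω => (X ω, (L ω + e ω, M ω)))
      (fun x => ∫ l, f (x.1, l) * q (x.2.1 - l) ∂ν) (m.prod (η.prod (P.map M))) := by
  have hnoise : HasWeightedDensity P 1 (fun ω => (e ω, M ω)) (fun z => q z.1)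
      (η.prod (P.map M)) := by
    have hindep : IndepFun (fun ω => ((1 : Ω → ℝ) ω, e ω)) M P :=
      heM.comp (measurable_const.prodMk measurable_id) measurable_id
    simpa only [Pi.one_apply, mul_one] using he.prodMk_indepFun (one_map hM) hindep
  have hshear : HasWeightedDensity P Y (fun ω => ((X ω, (L ω + e ω, M ω)), L ω))
      (fun w => f (w.1.1, w.2) * q (w.1.2.1 - w.2)) ((m.prod (η.prod (P.map M))).prod ν) := by
    refine comp_measurePreserving (X := fun ω => ((X ω, L ω), (e ω, M ω)))
      (measurePreserving_shear m ν η (P.map M)) (by fun_prop) ?_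
    simpa only [Function.comp_def, add_sub_cancel_left] using h.prodMk_indepFun hnoise hind
  exact hshear.fst

end HasWeightedDensity

/-- The set `Ω` equipped with the σ-algebra `m`. Taking the identity map into this type as a random
variable lets conditioning on `m` be treated as conditioning on a random variable. -/
def WithSigmaAlgebra {Ω : Type*} (_m : MeasurableSpace Ω) : Type _ := Ω

namespace WithSigmaAlgebra

variable {Ω : Type*} {m m' : MeasurableSpace Ω}

instance : MeasurableSpace (WithSigmaAlgebra m) := m

/-- The identity map from `Ω` to `Ω` equipped with the σ-algebra `m`. -/
def mk (m : MeasurableSpace Ω) : Ω → WithSigmaAlgebra m := id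

theorem measurable_mk (h : m ≤ m') : Measurable[m'] (mk m) :=
  measurable_id'' h

theorem comap_mk : MeasurableSpace.comap (mk m) inferInstance = m :=
  MeasurableSpace.comap_id

end WithSigmaAlgebra

theorem measurable_ciInf_of_continuous_s9 {ι Ω α : Type*} [TopologicalSpace ι]
    [TopologicalSpace.SeparableSpace ι] [MeasurableSpace Ω] [ConditionallyCompleteLinearOrder α]
    [TopologicalSpace α] [OrderTopology α] [SecondCountableTopology α] [MeasurableSpace α]
    [BorelSpace α] {X : ι → Ω → α} (hX : ∀ i, Measurable (X i))
    (hX_cont : ∀ ω, Continuous fun i => X i ω) :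
    Measurable fun ω => ⨅ i, X i ω := by
  obtain ⟨S, hS, hS_dense⟩ := TopologicalSpace.exists_countable_dense ι
  have := hS.to_subtype
  simp_rw [← fun ω => hS_dense.ciInf' (hX_cont ω)]
  exact .iInf fun s => hX s

theorem measurable_runInf_s9 {Ω : Type*} [m0 : MeasurableSpace Ω] {F : Filtration ℝ≥0 m0}
    {X : ℝ≥0 → Ω → ℝ} (hX_adapted : Adapted F X) (hX_cont : ∀ ω, Continuous fun s => X s ω)
    (θ : ℝ≥0) : Measurable[F θ] (runInf X θ) :=
  measurable_ciInf_of_continuous_s9 (Ω := WithSigmaAlgebra (F θ)) (X := fun s : Icc 0 θ => X s)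
    (fun s => (hX_adapted s).mono (F.mono s.2.2) le_rfl)
    fun ω => (hX_cont ω).comp continuous_subtype_val

theorem measurable_survivalPayoff {Ω : Type*} [MeasurableSpace Ω] {φ r : Ω → ℝ}
    (hφ : Measurable φ) (hr : Measurable r) :
    Measurable fun z : Ω × ℝ => φ z.1 * (if z.2 < r z.1 then 1 else 0) :=
  (hφ.comp measurable_fst).mul <|
    .ite (measurableSet_lt measurable_snd (hr.comp measurable_fst)) measurable_const
      measurable_const

section Comap

variable {Ω G : Type*} [mG : MeasurableSpace G] (f g : Ω → G)

theorem comap_add_le [Add G] [MeasurableAdd₂ G] :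
    mG.comap (fun ω => f ω + g ω) ≤ mG.comap f ⊔ mG.comap g :=
  (((comap_measurable f).mono le_sup_left le_rfl).add
    ((comap_measurable g).mono le_sup_right le_rfl)).comap_le

theorem comap_sub_le [Sub G] [MeasurableSub₂ G] :
    mG.comap (fun ω => f ω - g ω) ≤ mG.comap f ⊔ mG.comap g :=
  (((comap_measurable f).mono le_sup_left le_rfl).sub
    ((comap_measurable g).mono le_sup_right le_rfl)).comap_le

end Comap

section Increments

variable {Ω ι G : Type*} [Preorder ι] [AddCommGroup G] [mG : MeasurableSpace G]

/-- The σ-algebra generated by the past increments `ε_s − ε_t`, `s ≤ t`, of the noise. -/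
abbrev incrementSigma (ε : ι → Ω → G) (t : ι) : MeasurableSpace Ω :=
  ⨆ s ∈ Iic t, mG.comap (fun ω => ε s ω - ε t ω)

variable [MeasurableSub₂ G]

theorem incrementSigma_le_iSup (ε : ι → Ω → G) (t : ι) :
    incrementSigma ε t ≤ ⨆ s, mG.comap (ε s) :=
  iSup₂_le fun s _ => (comap_sub_le (ε s) (ε t)).trans
    (sup_le (le_iSup_of_le s le_rfl) (le_iSup_of_le t le_rfl))

theorem iSup_comap_add_eq_sup_incrementSigma [MeasurableAdd₂ G] (L : Ω → G) (ε : ι → Ω → G)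
    (t : ι) :
    ⨆ s ∈ Iic t, mG.comap (fun ω => L ω + ε s ω) =
      mG.comap (fun ω => L ω + ε t ω) ⊔ incrementSigma ε t := by
  have hincrement (s : ι) (hs : s ∈ Iic t) :
      mG.comap (fun ω => ε s ω - ε t ω) ≤ incrementSigma ε t :=
    le_iSup₂_of_le s hs le_rfl
  refine le_antisymm (iSup₂_le fun s hs => ?_) (sup_le ?_ (iSup₂_le fun s hs => ?_))
  · calc mG.comap (fun ω => L ω + ε s ω)
        = mG.comap (fun ω => (L ω + ε t ω) + (ε s ω - ε t ω)) := by
          simp only [add_assoc, add_sub_cancel]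
      _ ≤ mG.comap (fun ω => L ω + ε t ω) ⊔ incrementSigma ε t :=
          (comap_add_le _ _).trans (sup_le_sup_left (hincrement s hs) _)
  · exact le_iSup₂_of_le t self_mem_Iic le_rfl
  · calc mG.comap (fun ω => ε s ω - ε t ω)
        = mG.comap (fun ω => (L ω + ε s ω) - (L ω + ε t ω)) := by
          simp only [add_sub_add_left_eq_sub]
      _ ≤ ⨆ s ∈ Iic t, mG.comap (fun ω => L ω + ε s ω) := (comap_sub_le _ _).trans
          (sup_le (le_iSup₂_of_le s hs le_rfl) (le_iSup₂_of_le t self_mem_Iic le_rfl))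

end Increments

theorem insiderSigma_eq_comap {Ω : Type*} [m0 : MeasurableSpace Ω] (F : Filtration ℝ≥0 m0)
    (L : Ω → ℝ) (ε : ℝ≥0 → Ω → ℝ) (t : ℝ≥0) :
    insiderSigma F L ε t = MeasurableSpace.comap
      (fun ω => (WithSigmaAlgebra.mk (F t) ω,
        (L ω + ε t ω, WithSigmaAlgebra.mk (incrementSigma ε t) ω))) inferInstance := by
  rw [insiderSigma, iSup_comap_add_eq_sup_incrementSigma]
  exact .symm <| (MeasurableSpace.comap_prodMk _ _).trans <|
    congrArg₂ _ WithSigmaAlgebra.comap_mk <| (MeasurableSpace.comap_prodMk _ _).trans <|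
    congrArg _ WithSigmaAlgebra.comap_mk

section Insider

open WithSigmaAlgebra

theorem hasWeightedDensity_of_jacod {Ω Λ : Type*} {m m0 : MeasurableSpace Ω} [MeasurableSpace Λ]
    {P : Measure Ω} [IsFiniteMeasure P] (hm : m ≤ m0) {L : Ω → Λ} (hL : Measurable L)
    {p : Λ → Ω → ℝ} (hp_nonneg : ∀ x ω, 0 ≤ p x ω)
    (hp_meas : Measurable[m.prod inferInstance] fun z : Ω × Λ => p z.2 z.1)
    (hp_density : ∀ f : Λ → ℝ, Measurable f → (∃ C, ∀ x, |f x| ≤ C) →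
      P[fun ω => f (L ω) | m] =ᵐ[P] fun ω => ∫ x, f x * p x ω ∂(P.map L)) :
    HasWeightedDensity P 1 (fun ω => (mk m ω, L ω)) (fun z => p z.2 z.1)
      ((P.map (mk m)).prod (P.map L)) := by
  refine .of_condExp_indicator (measurable_mk hm) hL hp_meas (fun z => hp_nonneg z.2 z.1)
    fun B hB => ?_
  have hB_bdd (x : Λ) : |B.indicator (fun _ => (1 : ℝ)) x| ≤ 1 := by
    by_cases hx : x ∈ B <;> simp [hx]
  rw [comap_mk]
  refine (hp_density _ (measurable_const.indicator hB) ⟨1, hB_bdd⟩).trans (.of_eq ?_)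
  funext ω
  rw [← integral_indicator hB]
  congr 1 with x
  by_cases hx : x ∈ B <;> simp [hx, mk]

theorem indepFun_signal_noise {Ω : Type*} [m0 : MeasurableSpace Ω] {P : Measure Ω}
    {F : Filtration ℝ≥0 m0} {L : Ω → ℝ} {ε : ℝ≥0 → Ω → ℝ}
    (hε_indep : Indep (⨆ s, MeasurableSpace.comap (ε s) inferInstance)
      ((⨆ s, F s) ⊔ MeasurableSpace.comap L inferInstance) P)
    {Y : Ω → ℝ} (hY : Measurable[(⨆ s, F s) ⊔ MeasurableSpace.comap L inferInstance] Y)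
    (t : ℝ≥0) :
    IndepFun (fun ω => (Y ω, (mk (F t) ω, L ω)))
      (fun ω => (ε t ω, mk (incrementSigma ε t) ω)) P := by
  have hF : Measurable[(⨆ s, F s) ⊔ MeasurableSpace.comap L inferInstance] (mk (F t)) :=
    measurable_mk ((le_iSup F t).trans le_sup_left)
  have hL : Measurable[(⨆ s, F s) ⊔ MeasurableSpace.comap L inferInstance] L :=
    (comap_measurable L).mono le_sup_right le_rfl
  have hε : Measurable[⨆ s, MeasurableSpace.comap (ε s) inferInstance] (ε t) :=
    (comap_measurable (ε t)).mono (le_iSup_of_le t le_rfl) le_rfl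
  have hinc : Measurable[⨆ s, MeasurableSpace.comap (ε s) inferInstance]
      (mk (incrementSigma ε t)) := measurable_mk (incrementSigma_le_iSup ε t)
  exact (IndepFun_iff_Indep _ _ _).2 <| indep_of_indep_of_le_left
    (indep_of_indep_of_le_right hε_indep.symm (hε.prodMk hinc).comap_le)
    (hY.prodMk (hF.prodMk hL)).comap_le

theorem noisy_information_key_lemma_Fmeasurable_general
    {Ω : Type*} [m0 : MeasurableSpace Ω] {P : Measure Ω} [IsProbabilityMeasure P]
    (F : Filtration ℝ≥0 m0) (L : Ω → ℝ) (hL : Measurable L)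
    (p : ℝ≥0 → ℝ → Ω → ℝ)
    (hp_nonneg : ∀ t x ω, 0 ≤ p t x ω)
    (hp_meas : ∀ t, Measurable[(F t).prod inferInstance] fun z : Ω × ℝ => p t z.2 z.1)
    (hp_density : ∀ (t : ℝ≥0) (f : ℝ → ℝ), Measurable f → (∃ C, ∀ x, |f x| ≤ C) →
      (P[fun ω => f (L ω) | F t]) =ᵐ[P] fun ω => ∫ x, f x * p t x ω ∂(P.map L))
    (ε : ℝ≥0 → Ω → ℝ) (hε_meas : ∀ s, Measurable (ε s))
    (hε_indep : Indep (⨆ s, MeasurableSpace.comap (ε s) inferInstance)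
      ((⨆ s, F s) ⊔ MeasurableSpace.comap L inferInstance) P)
    (t θ : ℝ≥0) (htθ : t ≤ θ)
    (hε_back : Indep (incrementSigma ε t) (MeasurableSpace.comap (ε t) inferInstance) P)
    (q : ℝ → ℝ) (hq_meas : Measurable q) (hq_nonneg : ∀ x, 0 ≤ q x)
    (hq_density : P.map (ε t) = volume.withDensity fun x => ENNReal.ofReal (q x))
    (Y : Ω × ℝ → ℝ) (hY_meas : Measurable[(F θ).prod inferInstance] Y)
    (hY_int : Integrable (fun ω => Y (ω, L ω)) P)
    (v : Ω × ℝ → ℝ) (hv_meas : Measurable[(F t).prod inferInstance] v)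
    (hv : ∀ᵐ l ∂(P.map L), (fun ω => v (ω, l)) =ᵐ[P] P[fun ω => Y (ω, l) * p θ l ω | F t]) :
    (∀ᵐ ω ∂P, 0 < ∫ l, p t l ω * q (L ω + ε t ω - l) ∂(P.map L)) ∧
    ∀ᵐ ω ∂P,
      (P[fun ω' => Y (ω', L ω') | insiderSigma F L ε t]) ω
        * (∫ l, p t l ω * q (L ω + ε t ω - l) ∂(P.map L))
      = ∫ l, v (ω, l) * q (L ω + ε t ω - l) ∂(P.map L) := by
  have hp (s : ℝ≥0) := hasWeightedDensity_of_jacod (F.le s) hL (hp_nonneg s) (hp_meas s)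
    (hp_density s)
  have hcoarse : HasWeightedDensity P (fun ω => Y (ω, L ω)) (fun ω => (mk (F t) ω, L ω)) v
      ((P.map (mk (F t))).prod (P.map L)) :=
    ((hp θ).mul_comp hY_meas hY_int).comp_of_condExp (X := mk (F θ)) (π := mk (F t))
      (measurable_mk (F.le θ)) (measurable_mk (F.mono htθ)) hv_meas <|
      (comap_mk (m := F t)).symm ▸ hv
  have hY_sup : Measurable[(⨆ s, F s) ⊔ MeasurableSpace.comap L inferInstance]
      fun ω => Y (ω, L ω) :=
    hY_meas.comp <| (measurable_mk ((le_iSup F θ).trans le_sup_left)).prodMk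
      ((comap_measurable L).mono le_sup_right le_rfl)
  have hε := HasWeightedDensity.of_map_eq_withDensity (hε_meas t) hq_meas hq_nonneg hq_density
  have hinc : Measurable (mk (incrementSigma ε t)) :=
    measurable_mk (incrementSigma_le_iSup ε t |>.trans (iSup_le fun s => (hε_meas s).comap_le))
  have hback : IndepFun (ε t) (mk (incrementSigma ε t)) P := by
    rw [IndepFun_iff_Indep, comap_mk]
    exact hε_back.symm
  have hD := (hp t).add_indepFun (hp_meas t) hε hq_meas hinc hback
    (indepFun_signal_noise hε_indep measurable_const t)
  have hV := hcoarse.add_indepFun hv_meas hε hq_meas hinc hback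
    (indepFun_signal_noise hε_indep hY_sup t)
  rw [insiderSigma_eq_comap]
  exact ⟨hD.ae_pos, hD.condExp_mul_eq hV⟩

end Insider

/-- **Proposition 5.1, second formula.** Under Jacod's density hypothesis and the
noisy-barrier setup, if `v(·,l)` is, for `P^L`-a.e. `l`, a version of
`E_P[φ_θ p_θ(l) 1_{X*_θ > l} | F_t]`, then `D_t := ∫ p_t(l) q_t(L_t − l) P^L(dl)` is a.s.
positive and, `P`-a.s., `E_P[φ_θ 1_{τ > θ} | F^I_t] · D_t = ∫ v(·,l) q_t(L_t − l)
P^L(dl)`. -/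
theorem noisy_information_key_lemma_Fmeasurable
    {Ω : Type*} [m0 : MeasurableSpace Ω] {P : Measure Ω} [IsProbabilityMeasure P]
    (F : Filtration ℝ≥0 m0)
    (X : ℝ≥0 → Ω → ℝ) (hX_adapted : Adapted F X)
    (hX_cont : ∀ ω, Continuous fun s => X s ω)
    (L : Ω → ℝ) (hL : Measurable L)
    (hX0 : ∀ᵐ ω ∂P, L ω < X 0 ω)
    (τ : Ω → ℝ≥0)
    (hτ : ∀ (θ : ℝ≥0) (ω : Ω), θ < τ ω ↔ L ω < runInf X θ ω)
    -- Jacod's density hypothesis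
    (p : ℝ≥0 → ℝ → Ω → ℝ)
    (hp_nonneg : ∀ t x ω, 0 ≤ p t x ω)
    (hp_meas : ∀ t, Measurable[(F t).prod inferInstance] fun q : Ω × ℝ => p t q.2 q.1)
    (hp_pos : ∀ t, ∀ᵐ ω ∂P, 0 < p t (L ω) ω)
    (hp_density : ∀ (t : ℝ≥0) (f : ℝ → ℝ), Measurable f → (∃ C, ∀ x, |f x| ≤ C) →
      (P[fun ω => f (L ω)|F t]) =ᵐ[P] fun ω => ∫ x, f x * p t x ω ∂(P.map L))
    -- the noise process: continuous, independent of `F_∞ ∨ σ(L)`, with backwardly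
    -- independent increments, whose marginal laws admit Lebesgue densities `q_t`
    (ε : ℝ≥0 → Ω → ℝ) (hε_meas : ∀ s, Measurable (ε s))
    (hε_cont : ∀ ω, Continuous fun s => ε s ω)
    (hε_indep : Indep (⨆ s, MeasurableSpace.comap (ε s) inferInstance)
      ((⨆ s, F s) ⊔ MeasurableSpace.comap L inferInstance) P)
    (hε_back : ∀ t θ : ℝ≥0, t ≤ θ →
      Indep (⨆ s ∈ Set.Iic t, MeasurableSpace.comap (fun ω => ε s ω - ε t ω) inferInstance)
        (MeasurableSpace.comap (ε θ) inferInstance) P)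
    (q : ℝ≥0 → ℝ → ℝ) (hq_meas : ∀ s, Measurable (q s)) (hq_nonneg : ∀ s x, 0 ≤ q s x)
    (hq_density : ∀ s, P.map (ε s) = volume.withDensity fun x => ENNReal.ofReal (q s x))
    -- times and payoff
    (t θ : ℝ≥0) (htθ : t ≤ θ)
    (φ : Ω → ℝ)
    (hφ_meas : Measurable[F θ] φ)
    (hφ_bdd : ∃ C, ∀ ω, |φ ω| ≤ C)
    -- the kernel `v`
    (v : Ω × ℝ → ℝ)
    (hv_meas : Measurable[(F t).prod inferInstance] v)
    (hv : ∀ᵐ l ∂(P.map L), (fun ω => v (ω, l)) =ᵐ[P]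
      P[fun ω => φ ω * p θ l ω * (if l < runInf X θ ω then 1 else 0)|F t]) :
    (∀ᵐ ω ∂P, 0 < ∫ l, p t l ω * q t (L ω + ε t ω - l) ∂(P.map L)) ∧
    ∀ᵐ ω ∂P,
      (P[fun ω' => φ ω' * (if θ < τ ω' then 1 else 0)|insiderSigma F L ε t]) ω
        * (∫ l, p t l ω * q t (L ω + ε t ω - l) ∂(P.map L))
      = ∫ l, v (ω, l) * q t (L ω + ε t ω - l) ∂(P.map L) := by
  obtain ⟨C, hC⟩ := hφ_bdd
  have hpayoff := measurable_survivalPayoff (Ω := WithSigmaAlgebra (F θ)) hφ_meas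
    (measurable_runInf_s9 hX_adapted hX_cont θ)
  have hpayoff_int : Integrable (fun ω => φ ω * (if L ω < runInf X θ ω then 1 else 0)) P := by
    have hmeas := hpayoff.comp ((WithSigmaAlgebra.measurable_mk (F.le θ)).prodMk hL)
    refine .of_bound hmeas.aestronglyMeasurable C (ae_of_all _ fun ω => ?_)
    split_ifs <;> simp [hC ω, (abs_nonneg _).trans (hC ω)]
  simp only [hτ]
  exact noisy_information_key_lemma_Fmeasurable_general F L hL p hp_nonneg hp_meas hp_density ε
    hε_meas hε_indep t θ htθ (hε_back t t le_rfl) (q t) (hq_meas t) (hq_nonneg t) (hq_density t)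
    _ hpayoff hpayoff_int v hv_meas (by simpa only [mul_right_comm] using hv)
end
end
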